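/- Let K be a field of characteristic zero, n ≥ 1, and let Γ be a subgroup of GL_n(K). Suppose there exist elements γ₁, …, γ_r ∈ Γ (not necessarily distinct) such that Γ = ⟨γ₁⟩⋯⟨γ_r⟩, i.e., every element of Γ can be written as γ₁^{k₁}⋯γ_r^{k_r} with k₁, …, k_r ∈ ℤ, and suppose that at most one of the elements γ₁, …, γ_r is not semi-simple. Then Γ is virtually solvable. -/

import Mathlib

open Matrix

/-- An element of `GL n K` is semi-simple if the corresponding linear endomorphism
of `K^n` is a semisimple endomorphism. -/
def IsSemisimpleElt {n : ℕ} {K : Type*} [Field K] (g : GL (Fin n) K) : Prop :=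
  Module.End.IsSemisimple ((g : Matrix (Fin n) (Fin n) K).mulVecLin)

/-- A group is virtually solvable if it has a solvable subgroup of finite index. -/
def IsVirtuallySolvable (G : Type*) [Group G] : Prop :=
  ∃ H : Subgroup G, H.FiniteIndex ∧ IsSolvable ↥H

theorem jd_norm {A : Type*} [NormedRing A] [NormedSpace ℝ A] [FiniteDimensional ℝ A] {H : Type*} [Group H] [Finite H]
    (ρ : H →* A) (hρ : Function.Injective ρ) (hn : ∀ h, ‖ρ h‖ ≤ 1) :
    ∃ H0 : Subgroup H, H0.index ≤ 5 ^ (Module.finrank ℝ A) ∧ ∀ a ∈ H0, ∀ b ∈ H0, a * b = b * a := by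
  have hl : ∀ (h : H) (x : A), ‖ρ h * x‖ = ‖x‖ := by
    have h1 : ∀ (h : H) (x : A), ‖ρ h * x‖ ≤ ‖x‖ := fun h x =>
      (norm_mul_le _ _).trans (mul_le_of_le_one_left (norm_nonneg _) (hn h))
    intro h x
    refine le_antisymm (h1 h x) ?_
    have := h1 h⁻¹ (ρ h * x)
    rwa [← mul_assoc, ← map_mul, inv_mul_cancel, map_one, one_mul] at this
  have hr : ∀ (h : H) (x : A), ‖x * ρ h‖ = ‖x‖ := by
    have h1 : ∀ (h : H) (x : A), ‖x * ρ h‖ ≤ ‖x‖ := fun h x =>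
      (norm_mul_le _ _).trans (mul_le_of_le_one_right (norm_nonneg _) (hn h))
    intro h x
    refine le_antisymm (h1 h x) ?_
    have := h1 h⁻¹ (x * ρ h)
    rwa [mul_assoc, ← map_mul, mul_inv_cancel, map_one, mul_one] at this
  set d : H → ℝ := fun h => ‖ρ h - 1‖ with hd
  have d0 : ∀ h, d h = 0 → h = 1 := by
    intro h hh
    have : ρ h - 1 = 0 := norm_eq_zero.1 hh
    exact hρ (by rw [map_one]; exact sub_eq_zero.1 this)
  have dc : ∀ a b : H, d (a * b * a⁻¹ * b⁻¹) = ‖ρ a * (ρ b - 1) - (ρ b - 1) * ρ a‖ := by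
    intro a b
    have e : (ρ (a * b * a⁻¹ * b⁻¹) - 1) * ρ (b * a) = ρ a * (ρ b - 1) - (ρ b - 1) * ρ a := by
      rw [sub_mul, ← map_mul]
      have : a * b * a⁻¹ * b⁻¹ * (b * a) = a * b := by group
      rw [this]
      simp only [map_mul]; noncomm_ring
    rw [← e, hr]
  have dc1 : ∀ a b : H, d (a * b * a⁻¹ * b⁻¹) ≤ 2 * d b := by
    intro a b
    rw [dc]
    calc _ ≤ ‖ρ a * (ρ b - 1)‖ + ‖(ρ b - 1) * ρ a‖ := norm_sub_le _ _
      _ = 2 * d b := by rw [hl, hr]; simp only [hd]; ring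
  have dc2 : ∀ a b : H, d (a * b * a⁻¹ * b⁻¹) ≤ 2 * d a * d b := by
    intro a b
    rw [dc]
    have : ρ a * (ρ b - 1) - (ρ b - 1) * ρ a = (ρ a - 1) * (ρ b - 1) - (ρ b - 1) * (ρ a - 1) := by
      noncomm_ring
    rw [this]
    calc _ ≤ ‖(ρ a - 1) * (ρ b - 1)‖ + ‖(ρ b - 1) * (ρ a - 1)‖ := norm_sub_le _ _
      _ ≤ d a * d b + d b * d a := add_le_add (norm_mul_le _ _) (norm_mul_le _ _)
      _ = _ := by ring
  have nss : ∀ c : H, (∀ k : ℕ, d (c ^ k) < 1) → c = 1 := by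
    intro c hc
    obtain ⟨x, hx⟩ := Finite.exists_max (fun x : Subgroup.zpowers c => d x)
    obtain ⟨x, hxm⟩ := x
    obtain ⟨m, rfl⟩ : x ∈ Submonoid.powers c := by
      rwa [mem_powers_iff_mem_zpowers]
    have h2 := hx ⟨(c ^ m) ^ 2, Subgroup.pow_mem _ hxm 2⟩
    simp only at h2
    have h3 : 2 * d (c ^ m) - d (c ^ m) * d (c ^ m) ≤ d ((c ^ m) ^ 2) := by
      have e : ρ ((c ^ m) ^ 2) - 1 = (2 : ℕ) • (ρ (c ^ m) - 1) + (ρ (c ^ m) - 1) * (ρ (c ^ m) - 1) := by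
        rw [map_pow ρ (c ^ m) 2]; noncomm_ring
      have e2 : (2 : ℕ) • (ρ (c ^ m) - 1) = (ρ ((c ^ m) ^ 2) - 1) - (ρ (c ^ m) - 1) * (ρ (c ^ m) - 1) := by
        rw [e]; abel
      have e3 : ‖(2 : ℕ) • (ρ (c ^ m) - 1)‖ = 2 * d (c ^ m) := by
        rw [← Nat.cast_smul_eq_nsmul ℝ, norm_smul]; simp [hd]
      have := norm_sub_le (ρ ((c ^ m) ^ 2) - 1) ((ρ (c ^ m) - 1) * (ρ (c ^ m) - 1))
      rw [← e2, e3] at this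
      have h4 := norm_mul_le (ρ (c ^ m) - 1) (ρ (c ^ m) - 1)
      simp only [hd] at *
      linarith
    have h5 := hc m
    have h6 : 0 ≤ d (c ^ m) := norm_nonneg _
    have h7 : d (c ^ m) = 0 := by nlinarith
    have h8 := hx ⟨c, Subgroup.mem_zpowers c⟩
    simp only at h8
    exact d0 c (le_antisymm (by linarith) (norm_nonneg _))
  have key : ∀ a b : H, d a < 1/2 → d b < 1/2 → a * b = b * a := by
    intro a b0 ha hb0
    by_contra hne
    let S : Set H := {b | d b < 1/2 ∧ a * b ≠ b * a}
    obtain ⟨b, ⟨hb, hbne⟩, hmin⟩ := Set.exists_min_image S d (Set.toFinite S) ⟨b0, hb0, hne⟩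
    set c := a * b * a⁻¹ * b⁻¹ with hc
    have hbpos : 0 < d b := lt_of_le_of_ne (norm_nonneg _) (fun h => hbne (by
      rw [d0 b h.symm]; simp))
    have hcb : d c < d b := by
      have := dc2 a b
      nlinarith
    have hac : a * c = c * a := by
      by_contra h
      have := hmin c ⟨by linarith, h⟩
      linarith
    have hk : ∀ k : ℕ, a ^ k * b * (a ^ k)⁻¹ * b⁻¹ = c ^ k := by
      have h1 : ∀ k : ℕ, a ^ k * b = c ^ k * b * a ^ k := by
        intro k
        induction k with
        | zero => simp
        | succ k ih =>
          have hcom : Commute a (c ^ k) := Commute.pow_right hac k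
          have hab : a * b = c * b * a := by rw [hc]; group
          rw [pow_succ' a, mul_assoc, ih, ← mul_assoc, ← mul_assoc, hcom.eq, mul_assoc (c ^ k), hab, pow_succ c]
          simp only [mul_assoc]
      intro k
      rw [h1 k]; group
    have : c = 1 := nss c (fun k => by rw [← hk k]; have := dc1 (a ^ k) b; linarith)
    apply hbne
    have hab : a * b = c * (b * a) := by rw [hc]; group
    rw [hab, this, one_mul]
  refine ⟨Subgroup.closure {h | d h < 1/2}, ?_, ?_⟩
  · set H0 := Subgroup.closure {h | d h < 1/2} with hH0
    have : Fintype (H ⧸ H0) := Fintype.ofFinite _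
    classical
    let f : H ⧸ H0 → A := fun q => (2 : ℝ) • ρ q.out
    have hsep : ∀ q q' : H ⧸ H0, q ≠ q' → 1 ≤ ‖f q - f q'‖ := by
      intro q q' hq
      by_contra hlt
      push Not at hlt
      apply hq
      rw [← q.out_eq, ← q'.out_eq]
      apply QuotientGroup.eq.2
      apply Subgroup.subset_closure
      show d _ < 1/2
      have : d (q.out⁻¹ * q'.out) = ‖ρ q.out - ρ q'.out‖ := by
        rw [norm_sub_rev, ← hl q.out⁻¹ (ρ q'.out - ρ q.out), mul_sub, ← map_mul, ← map_mul,
          inv_mul_cancel, map_one]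
      rw [this]
      simp only [f] at hlt
      rw [← smul_sub, norm_smul] at hlt
      simp at hlt
      linarith
    have hinj : Function.Injective f := by
      intro q q' h
      by_contra hne
      have := hsep q q' hne
      rw [h, sub_self, norm_zero] at this
      linarith
    have := Besicovitch.card_le_of_separated (Finset.univ.image f) (by
      intro c hc
      obtain ⟨q, -, rfl⟩ := Finset.mem_image.1 hc
      simp only [f]
      rw [norm_smul]
      have := hn q.out
      simp; linarith) (by
      intro c hc c' hc' hne
      obtain ⟨q, -, rfl⟩ := Finset.mem_image.1 hc
      obtain ⟨q', -, rfl⟩ := Finset.mem_image.1 hc'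
      exact hsep q q' (fun h => hne (by rw [h])))
    rw [Finset.card_image_of_injective _ hinj, Finset.card_univ, ← Nat.card_eq_fintype_card] at this
    exact this
  · have : IsMulCommutative (Subgroup.closure {h | d h < 1/2}) :=
      Subgroup.isMulCommutative_closure (fun a ha b hb => key a b ha hb)
    intro a ha b hb
    have := mul_comm' (⟨a, ha⟩ : Subgroup.closure {h | d h < 1/2}) ⟨b, hb⟩
    exact congrArg Subtype.val this

open scoped Matrix.Norms.L2Operator ComplexOrder MatrixOrder in
theorem jd_complex {n : ℕ} {H : Type*} [Group H] [Finite H]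
    (ρ : H →* Matrix (Fin n) (Fin n) ℂ) (hρ : Function.Injective ρ) :
    ∃ H0 : Subgroup H, H0.index ≤ 5 ^ (2 * n ^ 2) ∧ ∀ a ∈ H0, ∀ b ∈ H0, a * b = b * a := by
  have : Fintype H := Fintype.ofFinite _
  classical
  let S : Matrix (Fin n) (Fin n) ℂ := ∑ h, (ρ h)ᴴ * ρ h
  have hS : S.PosDef := by
    have : S = 1 + ∑ h ∈ Finset.univ.erase (1 : H), (ρ h)ᴴ * ρ h := by
      classical
      simp only [S]
      rw [← Finset.add_sum_erase _ _ (Finset.mem_univ (1 : H))]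
      simp
    rw [this]
    exact Matrix.PosDef.one.add_posSemidef (Matrix.posSemidef_sum _ (fun h _ =>
      Matrix.posSemidef_conjTranspose_mul_self _))
  obtain ⟨B, hSB⟩ := CStarAlgebra.nonneg_iff_eq_star_mul_self.mp hS.posSemidef.nonneg
  rw [Matrix.star_eq_conjTranspose] at hSB
  have hB : IsUnit B := by
    have h := hS.isUnit
    rw [hSB] at h
    rw [Matrix.isUnit_iff_isUnit_det] at h ⊢
    rw [Matrix.det_mul] at h
    exact isUnit_of_mul_isUnit_right h
  obtain ⟨B, rfl⟩ := hB
  have hinv : ∀ h, (ρ h)ᴴ * S * ρ h = S := by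
    intro h
    simp only [S]
    rw [Finset.mul_sum, Finset.sum_mul]
    refine Fintype.sum_equiv (Equiv.mulRight h) _ _ (fun x => ?_)
    simp [Matrix.mul_assoc]
  let σ : H →* Matrix (Fin n) (Fin n) ℂ :=
    { toFun := fun h => B.1 * ρ h * B⁻¹.1
      map_one' := by simp
      map_mul' := by
        intro x y
        rw [map_mul]
        have : B⁻¹.1 * B.1 = 1 := B.inv_mul
        calc _ = B.1 * ρ x * 1 * ρ y * B⁻¹.1 := by simp [Matrix.mul_assoc]
          _ = _ := by rw [← this]; simp only [Matrix.mul_assoc] }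
  have hσ : Function.Injective σ := by
    intro x y h
    apply hρ
    have h : B.1 * ρ x * B⁻¹.1 = B.1 * ρ y * B⁻¹.1 := h
    exact (Units.mul_right_inj B).1 ((Units.mul_left_inj B⁻¹).1 h)
  have h1 : ∀ h, (σ h)ᴴ * σ h = 1 := by
    intro h
    show (B.1 * ρ h * B⁻¹.1)ᴴ * (B.1 * ρ h * B⁻¹.1) = 1
    have e := hinv h
    rw [hSB] at e
    rw [Matrix.conjTranspose_mul, Matrix.conjTranspose_mul]
    calc _ = (B⁻¹.1)ᴴ * ((ρ h)ᴴ * (B.1ᴴ * B.1) * ρ h) * B⁻¹.1 := by simp only [Matrix.mul_assoc]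
      _ = (B.1 * B⁻¹.1)ᴴ * (B.1 * B⁻¹.1) := by rw [e, Matrix.conjTranspose_mul]; simp only [Matrix.mul_assoc]
      _ = 1 := by rw [B.mul_inv]; simp
  have h2 : ∀ h, ‖σ h‖ ≤ 1 := by
    intro h
    have := Matrix.l2_opNorm_conjTranspose_mul_self (σ h)
    rw [h1] at this
    have h3 : ‖(1 : Matrix (Fin n) (Fin n) ℂ)‖ ≤ 1 := by
      rcases isEmpty_or_nonempty (Fin n) with h | h
      · have : (1 : Matrix (Fin n) (Fin n) ℂ) = 0 := Subsingleton.elim _ _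
        rw [this, norm_zero]; norm_num
      · exact le_of_eq norm_one
    nlinarith [norm_nonneg (σ h)]
  obtain ⟨H0, h0, h0'⟩ := jd_norm σ hσ h2
  refine ⟨H0, ?_, h0'⟩
  have e : Module.finrank ℝ (Matrix (Fin n) (Fin n) ℂ) = 2 * n ^ 2 := by
    rw [Module.finrank_matrix]; simp; ring
  rwa [e] at h0

universe u

theorem spec_nf {X : Type u} [CommRing X] [CharZero X] (E : Set X) (hE : E.Finite) :
    ∃ (L : Type u) (_ : Field L) (_ : NumberField L), Nonempty (Algebra.adjoin ℤ E →+* L) := by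
  let T := Algebra.adjoin ℤ E
  have hT : Algebra.FiniteType ℤ T := by
    rw [← Subalgebra.fg_iff_finiteType]
    exact ⟨hE.toFinset, by simp [T]⟩
  have inj : Function.Injective (algebraMap ℤ T) := by
    have : Function.Injective (algebraMap ℤ X) := by
      simpa using Int.cast_injective
    intro a b hab
    apply this
    exact congrArg (Subtype.val) hab
  let TQ := TensorProduct ℤ ℚ T
  have hnt : Nontrivial TQ := by
    have hf : Module.Flat ℤ ℚ := IsLocalization.flat ℚ (nonZeroDivisors ℤ)
    have : Function.Injective (Algebra.TensorProduct.includeLeft : ℚ →ₐ[ℤ] TQ) := by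
      exact Algebra.TensorProduct.includeLeft_injective inj
    exact this.nontrivial
  obtain ⟨m, hm⟩ := Ideal.exists_maximal TQ
  let L := TQ ⧸ m
  let _ : Field L := Ideal.Quotient.field m
  have : Algebra.FiniteType ℚ L := inferInstance
  have hfin : Module.Finite ℚ L := finite_of_finite_type_of_isJacobsonRing ℚ L
  have : CharZero L := charZero_of_injective_algebraMap (algebraMap ℚ L).injective
  refine ⟨L, inferInstance, { to_charZero := this, to_finiteDimensional := ?_ }, ⟨(Ideal.Quotient.mk m).comp (Algebra.TensorProduct.includeRight : T →ₐ[ℤ] TQ).toRingHom⟩⟩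
  convert hfin
  exact Subsingleton.elim _ _

theorem lift_zmod (p k n : ℕ) [hp : Fact p.Prime] {H : Type*} [Group H] [Finite H]
    (hH : (Nat.card H).Coprime p) (ρ : H →* GL (Fin n) (ZMod p)) :
    ∃ σ : H →* GL (Fin n) (ZMod (p ^ (k + 1))),
      ∀ h, GeneralLinearGroup.map (ZMod.castHom (dvd_pow_self p (Nat.succ_ne_zero k)) (ZMod p)) (σ h) = ρ h := by
  classical
  have : NeZero (p ^ (k+1)) := ⟨pow_ne_zero _ hp.1.ne_zero⟩
  set c := ZMod.castHom (dvd_pow_self p (Nat.succ_ne_zero k)) (ZMod p) with hc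
  set π := GeneralLinearGroup.map (n := Fin n) c with hπ
  have csurj : Function.Surjective c := ZMod.ringHom_surjective c
  have cker : ∀ x, c x = 0 → ∃ z, x = p * z := by
    intro x hx
    obtain ⟨a, rfl⟩ := ZMod.natCast_zmod_surjective x
    rw [map_natCast, ZMod.natCast_eq_zero_iff] at hx
    obtain ⟨b, rfl⟩ := hx
    exact ⟨b, by push_cast; rfl⟩
  have cunit : ∀ x, IsUnit (c x) → IsUnit x := by
    intro x hx
    obtain ⟨a, rfl⟩ := ZMod.natCast_zmod_surjective x
    rw [map_natCast, ZMod.isUnit_iff_coprime] at hx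
    rw [ZMod.isUnit_iff_coprime]
    exact hx.pow_right _
  have πsurj : Function.Surjective π := by
    intro g
    choose f hf using csurj
    let M : Matrix (Fin n) (Fin n) (ZMod (p ^ (k+1))) := (g.1).map f
    have hM : c.mapMatrix M = g.1 := by
      ext i j; simp [M, hf]
    have hu : IsUnit M := by
      rw [Matrix.isUnit_iff_isUnit_det]
      apply cunit
      rw [RingHom.map_det, hM]
      exact (Matrix.isUnit_iff_isUnit_det _).1 g.isUnit
    refine ⟨hu.unit, ?_⟩
    apply Units.ext
    exact hM
  have πker : ∀ g, π g = 1 → g ^ (p ^ k) = 1 := by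
    intro g hg
    have key : ∀ j : ℕ, ∃ z : Matrix (Fin n) (Fin n) (ZMod (p ^ (k+1))),
        (g.1) ^ (p ^ j) = 1 + ((p ^ (j+1) : ℕ) : Matrix (Fin n) (Fin n) (ZMod (p ^ (k+1)))) * z := by
      intro j
      induction j with
      | zero =>
        have h1 : ∀ i j, ∃ z, (g.1 - 1) i j = p * z := by
          intro i j
          apply cker
          have : c.mapMatrix (g.1 - 1) i j = 0 := by
            rw [map_sub, map_one]
            have h2 : c.mapMatrix g.1 = 1 := congrArg Units.val hg
            rw [h2]; simp
          exact this
        choose z hz using h1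
        refine ⟨Matrix.of z, ?_⟩
        rw [← sub_eq_iff_eq_add', pow_zero, pow_one]
        ext i j
        have e : ((p ^ (0+1) : ℕ) : Matrix (Fin n) (Fin n) (ZMod (p ^ (k+1)))) * Matrix.of z = p • Matrix.of z := by
          rw [nsmul_eq_mul]; simp
        rw [hz i j, e]
        simp
      | succ j ih =>
        obtain ⟨z, hz⟩ := ih
        obtain ⟨r, hr⟩ := Commute.exists_add_pow_prime_eq hp.1
          (Commute.one_left (((p ^ (j+1) : ℕ) : Matrix (Fin n) (Fin n) (ZMod (p ^ (k+1)))) * z))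
        rw [pow_succ p j, pow_mul, hz, hr]
        have hcom : Commute (((p ^ (j+1) : ℕ) : Matrix (Fin n) (Fin n) (ZMod (p ^ (k+1))))) z :=
          Nat.cast_commute _ _
        obtain ⟨q, hq⟩ : ∃ q, (p ^ (j+1)) ^ p = p ^ (j+1+1) * q := by
          rw [← pow_mul]
          apply pow_dvd_pow
          have := hp.1.two_le
          nlinarith
        rw [hcom.mul_pow, ← Nat.cast_pow, hq]
        refine ⟨(q : Matrix (Fin n) (Fin n) (ZMod (p ^ (k+1)))) * z ^ p + z * r, ?_⟩
        push_cast
        rw [pow_succ' (p : Matrix (Fin n) (Fin n) (ZMod (p ^ (k+1)))) (j+1)]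
        rw [one_pow]
        noncomm_ring
    obtain ⟨z, hz⟩ := key k
    apply Units.ext
    rw [Units.val_pow_eq_pow_val, hz]
    have : ((p ^ (k+1) : ℕ) : Matrix (Fin n) (Fin n) (ZMod (p ^ (k+1)))) = 0 := by
      rw [← map_natCast (algebraMap (ZMod (p ^ (k+1))) (Matrix (Fin n) (Fin n) (ZMod (p ^ (k+1))))), ZMod.natCast_self, map_zero]
    rw [this]; simp
  let P : Subgroup (H × GL (Fin n) (ZMod (p ^ (k+1)))) :=
    (ρ.comp (MonoidHom.fst _ _)).eqLocus (π.comp (MonoidHom.snd _ _))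
  let f : P →* H := (MonoidHom.fst _ _).comp P.subtype
  have fsurj : Function.Surjective f := by
    intro h
    obtain ⟨g, hg⟩ := πsurj (ρ h)
    exact ⟨⟨(h, g), hg.symm⟩, rfl⟩
  let N := f.ker
  have hN : IsPGroup p N := by
    rintro ⟨⟨⟨h, g⟩, hx⟩, hf⟩
    have hf : h = 1 := hf
    subst hf
    refine ⟨k, ?_⟩
    have hx : ρ 1 = π g := hx
    have := πker g (by rw [← hx, map_one])
    ext1; ext1
    simp [this]
  have hidx : N.index = Nat.card H := by
    rw [Subgroup.index_ker, MonoidHom.range_eq_top.2 fsurj]; simp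
  have hcop : (Nat.card N).Coprime N.index := by
    rw [hidx]
    obtain ⟨m, hm⟩ := IsPGroup.iff_card.1 hN
    rw [hm]
    exact hH.symm.pow_left m
  obtain ⟨C, hC⟩ := Subgroup.exists_right_complement'_of_coprime hcop
  have hbij : Function.Bijective (f.comp C.subtype) := by
    constructor
    · rw [injective_iff_map_eq_one]
      intro x hx
      have : (x : P) ∈ N ⊓ C := ⟨hx, x.2⟩
      rw [hC.disjoint.eq_bot] at this
      exact Subtype.ext (Subgroup.mem_bot.1 this)
    · intro h
      obtain ⟨x, rfl⟩ := fsurj h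
      have hx : x ∈ N ⊔ C := by rw [hC.sup_eq_top]; trivial
      obtain ⟨y, hy, z, hz, rfl⟩ := Subgroup.mem_sup_of_normal_left.1 hx
      refine ⟨⟨z, hz⟩, ?_⟩
      have hy : f y = 1 := hy
      simp [hy]
  let e := MulEquiv.ofBijective _ hbij
  refine ⟨((MonoidHom.snd _ _).comp P.subtype).comp (C.subtype.comp e.symm.toMonoidHom), ?_⟩
  intro h
  have h1 : f (C.subtype (e.symm h)) = h := e.apply_symm_apply h
  have h2 := (C.subtype (e.symm h)).2
  have h3 : ρ (f (C.subtype (e.symm h))) = π ((C.subtype (e.symm h)).1.2) := h2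
  rw [h1] at h3
  exact h3.symm

theorem lift_complex (p n : ℕ) [hp : Fact p.Prime] {H : Type*} [Group H] [Finite H]
    (hH : (Nat.card H).Coprime p) (ρ : H →* GL (Fin n) (ZMod p)) (hρ : Function.Injective ρ) :
    ∃ σ : H →* Matrix (Fin n) (Fin n) ℂ, Function.Injective σ := by
  classical
  choose σ hσ using fun k => lift_zmod p k n hH ρ
  let Y := ∀ k : ℕ, ZMod (p ^ (k + 1))
  have hY : CharZero Y := by
    refine charZero_of_inj_zero ?_
    intro m hm
    have h1 : ((m : ZMod (p ^ (m + 1)))) = 0 := by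
      exact congrFun hm m
    rw [ZMod.natCast_eq_zero_iff] at h1
    by_contra hne
    have h2 := Nat.le_of_dvd (Nat.pos_of_ne_zero hne) h1
    have h3 : m + 1 < p ^ (m + 1) := Nat.lt_pow_self hp.1.one_lt
    omega
  let x : H → Matrix (Fin n) (Fin n) Y := fun h => Matrix.of fun i j k => (σ k h).1 i j
  have xmul : ∀ a b, x (a * b) = x a * x b := by
    intro a b
    ext i j k
    simp only [x, Matrix.mul_apply, map_mul, Units.val_mul, Matrix.of_apply]
    exact (Finset.sum_apply k (Finset.univ : Finset (Fin n)) (fun j' => (fun k => (σ k a).1 i j' : Y) * (fun k => (σ k b).1 j' j : Y))).symm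
  have xone : x 1 = 1 := by
    ext i j k
    simp only [x, map_one, Matrix.of_apply, Units.val_one, Matrix.one_apply]
    split_ifs <;> rfl
  have hunit : ∀ h : H, h ≠ 1 → ∃ i j, ∃ y : Y, (x h i j - (1 : Matrix (Fin n) (Fin n) Y) i j) * y = 1 := by
    intro h hh
    have h1 : (ρ h).1 ≠ 1 := fun e => hh (hρ (by rw [map_one]; exact Units.ext e))
    obtain ⟨i, j, hij⟩ : ∃ i j, (ρ h).1 i j ≠ (1 : Matrix (Fin n) (Fin n) (ZMod p)) i j := by
      by_contra hcon
      push Not at hcon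
      exact h1 (by ext i j; exact hcon i j)
    refine ⟨i, j, ?_⟩
    have h2 : ∀ k, IsUnit ((x h i j - (1 : Matrix (Fin n) (Fin n) Y) i j) k) := by
      intro k
      have : NeZero (p ^ (k+1)) := ⟨pow_ne_zero _ hp.1.ne_zero⟩
      set c := ZMod.castHom (dvd_pow_self p (Nat.succ_ne_zero k)) (ZMod p) with hc
      have cunit : ∀ x, IsUnit (c x) → IsUnit x := by
        intro x hx
        obtain ⟨a, rfl⟩ := ZMod.natCast_zmod_surjective x
        rw [map_natCast, ZMod.isUnit_iff_coprime] at hx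
        rw [ZMod.isUnit_iff_coprime]
        exact hx.pow_right _
      apply cunit
      have e1 : c ((σ k h).1 i j) = (ρ h).1 i j := by
        rw [← hσ k h]; rfl
      have e2 : (x h i j - (1 : Matrix (Fin n) (Fin n) Y) i j) k = (σ k h).1 i j - (1 : Matrix (Fin n) (Fin n) (ZMod (p^(k+1)))) i j := by
        simp only [x, Matrix.of_apply, Matrix.one_apply, Pi.sub_apply]
        split_ifs <;> rfl
      rw [e2]
      rw [map_sub]
      erw [e1]
      have e3 : c ((1 : Matrix (Fin n) (Fin n) (ZMod (p^(k+1)))) i j) = (1 : Matrix (Fin n) (Fin n) (ZMod p)) i j := by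
        simp only [Matrix.one_apply]
        split_ifs
        · exact map_one c
        · exact map_zero c
      erw [e3]
      exact (sub_ne_zero.2 hij).isUnit
    choose u hu using h2
    refine ⟨fun k => ((u k)⁻¹ : (ZMod (p^(k+1)))ˣ).1, ?_⟩
    funext k
    rw [Pi.mul_apply, ← hu k]
    exact (u k).mul_inv
  choose I J y hy using hunit
  let E : Set Y := (Set.range fun t : H × Fin n × Fin n => x t.1 t.2.1 t.2.2) ∪ Set.range (fun t : {h : H // h ≠ 1} => y t.1 t.2)
  have hE : E.Finite := (Set.finite_range _).union (Set.finite_range _)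
  obtain ⟨L, _, _, ⟨φ⟩⟩ := spec_nf E hE
  let ψ : L →+* ℂ := (IsAlgClosed.lift : L →ₐ[ℚ] ℂ).toRingHom
  let τ : Algebra.adjoin ℤ E →+* ℂ := ψ.comp φ
  let xx : H → Matrix (Fin n) (Fin n) (Algebra.adjoin ℤ E) := fun h => Matrix.of fun i j =>
    ⟨x h i j, Algebra.subset_adjoin (Or.inl ⟨(h, i, j), rfl⟩)⟩
  let s : H →* Matrix (Fin n) (Fin n) (Algebra.adjoin ℤ E) :=
    { toFun := xx
      map_one' := by
        ext i j
        have := congrFun (congrFun xone i) j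
        simp only [xx, Matrix.of_apply]
        rw [this]
        simp only [Matrix.one_apply]
        split_ifs <;> rfl
      map_mul' := by
        intro a b
        ext i j
        have := congrFun (congrFun (xmul a b) i) j
        simp only [xx, Matrix.of_apply]
        rw [this]
        simp [Matrix.mul_apply] }
  refine ⟨τ.mapMatrix.toMonoidHom.comp s, ?_⟩
  rw [injective_iff_map_eq_one]
  intro h hh
  by_contra hne
  have h1 := hy h hne
  let yy : Algebra.adjoin ℤ E := ⟨y h hne, Algebra.subset_adjoin (Or.inr ⟨⟨h, hne⟩, rfl⟩)⟩
  have h2 : (xx h (I h hne) (J h hne) - (1 : Matrix (Fin n) (Fin n) (Algebra.adjoin ℤ E)) (I h hne) (J h hne)) * yy = 1 := by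
    apply Subtype.ext
    show (x h (I h hne) (J h hne) - ((1 : Matrix (Fin n) (Fin n) (Algebra.adjoin ℤ E)) (I h hne) (J h hne) : Y)) * y h hne = 1
    rw [← h1]
    congr 2
    simp only [Matrix.one_apply]
    split_ifs <;> rfl
  have h3 := congrArg τ h2
  rw [map_mul, map_sub, map_one] at h3
  have h4 : τ (xx h (I h hne) (J h hne)) = (1 : Matrix (Fin n) (Fin n) ℂ) (I h hne) (J h hne) :=
    congrFun (congrFun hh (I h hne)) (J h hne)
  have h5 : τ ((1 : Matrix (Fin n) (Fin n) (Algebra.adjoin ℤ E)) (I h hne) (J h hne)) = (1 : Matrix (Fin n) (Fin n) ℂ) (I h hne) (J h hne) := by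
    simp only [Matrix.one_apply]
    split_ifs <;> simp
  rw [h4, h5, sub_self, zero_mul] at h3
  exact zero_ne_one h3

open scoped commutatorElement

theorem fin_struct (p n : ℕ) [hp : Fact p.Prime] {G : Type*} [Group G] [Finite G]
    (ι : G →* GL (Fin n) (ZMod p)) (hι : Function.Injective ι) (V : Subgroup G) [V.Normal]
    (hcomm : ∀ a ∈ V, ∀ b ∈ V, a * b = b * a) (hcard : Nat.card V ∣ p) (hidx : ¬ p ∣ V.index) :
    ∃ G0 : Subgroup G, G0.index ≤ 5 ^ (2 * n ^ 2) ∧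
      ∀ a ∈ G0, ∀ b ∈ G0, ∀ c ∈ G0, ∀ d ∈ G0, ⁅⁅a, b⁆, ⁅c, d⁆⁆ = 1 := by
  have hcp : V.index.Coprime p := ((hp.1.coprime_iff_not_dvd).2 hidx).symm
  obtain ⟨C, hC⟩ := Subgroup.exists_right_complement'_of_coprime
    (N := V) (hcp.symm.coprime_dvd_left hcard)
  have hCc : (Nat.card C).Coprime p := by
    have : V.index = Nat.card C := (Subgroup.IsComplement.card_right hC).symm
    rw [← this]; exact hcp
  obtain ⟨σ, hσ⟩ := lift_complex p n hCc (ι.comp C.subtype) (hι.comp C.subtype_injective)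
  obtain ⟨H0, h1, h2⟩ := jd_complex σ hσ
  let q := QuotientGroup.mk' V
  have hbij : Function.Bijective (q.comp C.subtype) := by
    constructor
    · rw [injective_iff_map_eq_one]
      intro x hx
      have : (x : G) ∈ V ⊓ C := ⟨(QuotientGroup.eq_one_iff _).1 hx, x.2⟩
      rw [hC.disjoint.eq_bot] at this
      exact Subtype.ext (Subgroup.mem_bot.1 this)
    · intro h
      obtain ⟨x, rfl⟩ := QuotientGroup.mk'_surjective V h
      have hx : x ∈ V ⊔ C := by rw [hC.sup_eq_top]; trivial
      obtain ⟨y, hy, z, hz, rfl⟩ := Subgroup.mem_sup_of_normal_left.1 hx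
      refine ⟨⟨z, hz⟩, ?_⟩
      have hy : q y = 1 := (QuotientGroup.eq_one_iff _).2 hy
      show q z = q (y * z)
      rw [map_mul, hy, one_mul]
  refine ⟨(H0.map (q.comp C.subtype)).comap q, ?_, ?_⟩
  · rw [Subgroup.index_comap_of_surjective _ (QuotientGroup.mk'_surjective V)]
    have := Subgroup.index_map_equiv H0 (MulEquiv.ofBijective _ hbij)
    exact this.le.trans h1
  · have key : ∀ a ∈ (H0.map (q.comp C.subtype)).comap q, ∀ b ∈ (H0.map (q.comp C.subtype)).comap q, ⁅a, b⁆ ∈ V := by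
      rintro a ⟨x, hx, hxa⟩ b ⟨y, hy, hyb⟩
      have : q ⁅a, b⁆ = 1 := by
        rw [map_commutatorElement, ← hxa, ← hyb, commutatorElement_eq_one_iff_mul_comm,
          ← map_mul, ← map_mul, h2 x hx y hy]
      exact (QuotientGroup.eq_one_iff _).1 this
    intro a ha b hb c hc d hd
    rw [commutatorElement_eq_one_iff_mul_comm]
    exact hcomm _ (key a ha b hb) _ (key c hc d hd)

theorem prime_conj {G H : Type*} [Group G] [Finite G] [Group H] (π : G →* H) (w x : G) (p : ℕ)
    (hp : p.Prime) (hw : (π w) ^ p = 1)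
    (hx : π x ∉ Subgroup.normalizer (Subgroup.zpowers (π w) : Set H)) :
    p ∣ ((Subgroup.zpowers w).map (MulAut.conj x).toMonoidHom).relIndex (Subgroup.zpowers w) := by
  have hone : π w ≠ 1 := by
    intro h1
    apply hx
    rw [h1, Subgroup.mem_normalizer_iff]
    intro h
    simp
  haveI := Fact.mk hp
  have hord : orderOf (π w) = p := orderOf_eq_prime hw hone
  have hfin : Finite (Subgroup.zpowers (π w)) := by
    apply Nat.finite_of_card_ne_zero
    rw [Nat.card_zpowers, hord]; exact hp.ne_zero
  set W := Subgroup.zpowers w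
  set W' := (Subgroup.zpowers w).map (MulAut.conj x).toMonoidHom
  have hcard : Nat.card ((π.comp W.subtype).range) = p := by
    rw [MonoidHom.range_comp, Subgroup.range_subtype, MonoidHom.map_zpowers, Nat.card_zpowers, hord]
  rw [← hcard, ← Subgroup.index_ker]
  apply Subgroup.index_dvd_of_le
  rintro ⟨y, hy⟩ hy'
  have hy' : y ∈ W' := hy'
  show π y = 1
  by_contra hne
  obtain ⟨a, ha⟩ := Subgroup.mem_zpowers_iff.1 hy
  obtain ⟨z, hz, hzy⟩ := hy'
  obtain ⟨b, hb⟩ := Subgroup.mem_zpowers_iff.1 hz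
  have hzy : x * z * x⁻¹ = y := hzy
  have e1 : π y = (π w) ^ a := by rw [← ha, map_zpow]
  have hz1 : π z = (π w) ^ b := by rw [← hb, map_zpow]
  have e2 : π y = π x * (π w) ^ b * (π x)⁻¹ := by rw [← hzy, map_mul, map_mul, map_inv, hz1]
  have hb0 : ¬ (p : ℤ) ∣ b := by
    intro hd
    rw [← hord, orderOf_dvd_iff_zpow_eq_one] at hd
    rw [hd] at e2
    simp at e2
    exact hne e2
  obtain ⟨c, d, hcd⟩ : ∃ c d : ℤ, b * c + p * d = 1 := by
    have : IsCoprime (b : ℤ) p := by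
      rw [isCoprime_comm]
      exact ((Nat.prime_iff_prime_int.1 hp).coprime_iff_not_dvd).2 hb0
    obtain ⟨u, v, h⟩ := this
    exact ⟨u, v, by linarith⟩
  have e3 : π x * π w * (π x)⁻¹ = (π w) ^ (a * c) := by
    have h1 : π w = ((π w) ^ b) ^ c := by
      rw [← _root_.zpow_mul]
      have : (π w) ^ (b * c + p * d) = (π w) ^ (b * c) := by
        rw [_root_.zpow_add, _root_.zpow_mul _ (p : ℤ), zpow_natCast, hw]; simp
      rw [← this, hcd, zpow_one]
    rw [_root_.zpow_mul, ← e1, e2, conj_zpow, ← h1]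
  apply hx
  apply Subgroup.mem_normalizer_fintype
  rintro v ⟨k, rfl⟩
  refine ⟨a * c * k, ?_⟩
  simp only
  rw [_root_.zpow_mul, ← e3, conj_zpow]

theorem fin_lemma {G : Type*} [Group G] [Finite G] {ι : Type*} [Fintype ι] (P : ι → ℕ)
    (hP : ∀ i, (P i).Prime) (hinj : Function.Injective P) {H : ι → Type*} [∀ i, Group (H i)]
    (π : ∀ i, G →* H i) (r : ℕ) (g : Fin r → G)
    (hg : ∀ x, ∃ k : Fin r → ℤ, x = (List.ofFn fun i => g i ^ k i).prod)
    (j0 : Fin r) (l : ℕ) (hl : 1 ≤ l) (h1 : ∀ i, i ≠ j0 → g i ^ l = 1)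
    (h2 : ∀ p, (π p (g j0)) ^ (l * P p) = 1) (hbig : l ^ ((r + 1) ^ 2) < ∏ p, P p) :
    ∃ p, (∀ x, π p x ∈ Subgroup.normalizer (Subgroup.zpowers (π p (g j0 ^ l)) : Set (H p))) ∧
      ¬ P p ∣ (Subgroup.zpowers (π p (g j0 ^ l))).relIndex (π p).range := by
  classical
  set w := g j0 ^ l with hw
  set W := Subgroup.zpowers w with hW
  have hidx0 : W.index ≠ 0 := Subgroup.index_ne_zero_of_finite
  have hidx : W.index ≤ l ^ r := by
    let f : (Fin r → Fin l) × W → G := fun t =>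
      (List.ofFn fun i => g i ^ (t.1 i : ℕ) * (if i = j0 then (t.2 : G) else 1)).prod
    have hf : Function.Surjective f := by
      intro x
      obtain ⟨k, rfl⟩ := hg x
      have hl0 : (0 : ℤ) < l := by exact_mod_cast hl
      refine ⟨(fun i => ⟨(k i % l).toNat, ?_⟩, ⟨w ^ (k j0 / l), ⟨_, rfl⟩⟩), ?_⟩
      · have a1 := Int.emod_nonneg (k i) hl0.ne'
        have a2 := Int.emod_lt_of_pos (k i) hl0
        omega
      · simp only [f]
        congr 1
        congr 1
        funext i
        have a1 := Int.emod_nonneg (k i) hl0.ne'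
        have e : g i ^ (k i) = g i ^ ((k i % l).toNat) * (g i ^ l) ^ (k i / l) := by
          rw [← zpow_natCast, ← zpow_natCast, ← _root_.zpow_mul, ← _root_.zpow_add, Int.toNat_of_nonneg a1]
          congr 1
          exact (Int.emod_add_mul_ediv (k i) l).symm
        rw [e]
        congr 1
        split_ifs with hi
        · rw [hi]
        · rw [h1 i hi, _root_.one_zpow]
    have := Nat.card_le_card_of_surjective f hf
    rw [Nat.card_prod, Nat.card_pi] at this
    simp only [Nat.card_eq_fintype_card, Fintype.card_fin, Finset.prod_const, Finset.card_univ] at this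
    rw [← Subgroup.card_mul_index W, mul_comm] at this
    exact Nat.le_of_mul_le_mul_right this Nat.card_pos
  by_contra hcon
  push Not at hcon
  let N : Option (Fin r) → ℕ := fun o => match o with
    | none => W.index
    | some i => (W.map (MulAut.conj (g i)).toMonoidHom).relIndex W
  have hN0 : ∀ o, N o ≠ 0 := by
    rintro (_ | i)
    · exact hidx0
    · exact Subgroup.index_ne_zero_of_finite
  have hN : ∀ o, N o ≤ l ^ r := by
    rintro (_ | i)
    · exact hidx
    · refine le_trans ?_ hidx
      have e1 : (W.map (MulAut.conj (g i)).toMonoidHom).index = W.index :=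
        Subgroup.index_map_equiv W (MulAut.conj (g i))
      rw [← e1, ← Subgroup.relIndex_top_right]
      apply Subgroup.relIndex_le_of_le_right le_top
      rw [Subgroup.relIndex_top_right, e1]
      exact hidx0
  have hbad : ∀ p, ∃ o, P p ∣ N o := by
    intro p
    by_cases hc : ∀ x, π p x ∈ Subgroup.normalizer (Subgroup.zpowers (π p w) : Set (H p))
    · refine ⟨none, (hcon p hc).trans ?_⟩
      rw [← MonoidHom.map_zpowers, MonoidHom.range_eq_map, Subgroup.relIndex_map_map, top_sup_eq,
        Subgroup.relIndex_top_right]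
      exact Subgroup.index_dvd_of_le le_sup_left
    · have : ∃ i, π p (g i) ∉ Subgroup.normalizer (Subgroup.zpowers (π p w) : Set (H p)) := by
        by_contra hno
        push Not at hno
        apply hc
        intro x
        obtain ⟨k, rfl⟩ := hg x
        have : ∀ y ∈ (List.ofFn fun i => g i ^ k i), y ∈ (Subgroup.normalizer (Subgroup.zpowers (π p w) : Set (H p))).comap (π p) := by
          intro y hy
          obtain ⟨i, rfl⟩ := (List.mem_ofFn' _ _).1 hy
          exact Subgroup.zpow_mem _ (Subgroup.mem_comap.2 (hno i)) _
        exact Subgroup.list_prod_mem _ this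
      obtain ⟨i, hi⟩ := this
      refine ⟨some i, prime_conj (π p) w (g i) (P p) (hP p) ?_ hi⟩
      rw [hw, map_pow, ← pow_mul]; exact h2 p
  choose b hb using hbad
  have : ∏ p, P p ≤ (l ^ r) ^ (r + 1) := by
    rw [← Finset.prod_fiberwise (s := Finset.univ) (g := b)]
    calc _ ≤ ∏ o : Option (Fin r), l ^ r := by
          apply Finset.prod_le_prod'
          intro o _
          refine (Nat.le_of_dvd (Nat.pos_of_ne_zero (hN0 o)) ?_).trans (hN o)
          rw [← Finset.prod_image (f := fun x : ℕ => x) (g := P) (fun _ _ _ _ h => hinj h)]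
          apply Finset.prod_primes_dvd
          · intro a ha
            obtain ⟨p, _, rfl⟩ := Finset.mem_image.1 ha
            exact (hP p).prime
          · intro a ha
            obtain ⟨p, hp, rfl⟩ := Finset.mem_image.1 ha
            rw [← (Finset.mem_filter.1 hp).2]
            exact hb p
      _ = _ := by simp
  have h3 : (l ^ r) ^ (r + 1) ≤ l ^ ((r + 1) ^ 2) := by
    rw [← pow_mul]
    apply Nat.pow_le_pow_right hl
    nlinarith
  omega

theorem ultra_solv {G : Type*} [Group G] (J : ℕ)
    (h : ∀ F : Finset G, 1 ∉ F → ∃ G0 : Subgroup G, G0.index ≠ 0 ∧ G0.index ≤ J ∧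
      ∀ a ∈ G0, ∀ b ∈ G0, ∀ c ∈ G0, ∀ d ∈ G0, ⁅⁅a, b⁆, ⁅c, d⁆⁆ ∉ F) :
    ∃ H : Subgroup G, H.FiniteIndex ∧ IsSolvable ↥H := by
  classical
  choose S hS1 hS2 hS3 using fun F : Finset G => h (F.erase 1) (by simp)
  let U : Ultrafilter (Finset G) := Ultrafilter.of Filter.atTop
  let H : Subgroup G :=
    { carrier := {g | ∀ᶠ F in (U : Filter (Finset G)), g ∈ S F}
      one_mem' := Filter.Eventually.of_forall fun F => (S F).one_mem
      mul_mem' := fun {a b} ha hb => by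
        filter_upwards [ha, hb] with F h1 h2 using (S F).mul_mem h1 h2
      inv_mem' := fun {a} ha => by
        filter_upwards [ha] with F h1 using (S F).inv_mem h1 }
  have hHm : ∀ g, g ∈ H ↔ ∀ᶠ F in (U : Filter (Finset G)), g ∈ S F := fun g => Iff.rfl
  refine ⟨H, ?_, ?_⟩
  · rw [Subgroup.finiteIndex_iff_finite_quotient]
    by_contra hinf
    have : Infinite (G ⧸ H) := not_finite_iff_infinite.1 hinf
    let e := Infinite.natEmbedding (G ⧸ H)
    let f : ℕ → G := fun i => (e i).out
    have hex : ∀ F, ∃ t : Fin (J+1) × Fin (J+1), t.1 ≠ t.2 ∧ (f t.1)⁻¹ * f t.2 ∈ S F := by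
      intro F
      have : (S F).FiniteIndex := ⟨hS1 F⟩
      have : Finite (G ⧸ S F) := Subgroup.finite_quotient_of_finiteIndex
      have : Fintype (G ⧸ S F) := Fintype.ofFinite _
      obtain ⟨i, j, hij, hh⟩ := Fintype.exists_ne_map_eq_of_card_lt
        (fun i : Fin (J+1) => (QuotientGroup.mk (f i) : G ⧸ S F)) (by
          rw [← Nat.card_eq_fintype_card, Fintype.card_fin]
          exact Nat.lt_succ_of_le (hS2 F))
      exact ⟨(i, j), hij, QuotientGroup.eq.1 hh⟩
    choose t ht1 ht2 using hex
    obtain ⟨s, hs⟩ : ∃ s, ∀ᶠ F in (U : Filter (Finset G)), t F = s := by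
      have := (Ultrafilter.finite_biUnion_mem_iff (f := U) (Set.finite_univ : (Set.univ : Set (Fin (J+1) × Fin (J+1))).Finite) (s := fun s => {F | t F = s})).1 (by
        have hu : (⋃ i ∈ (Set.univ : Set (Fin (J+1) × Fin (J+1))), {F | t F = i}) = Set.univ := by
          ext F; simp
        rw [hu]; exact Filter.univ_mem)
      obtain ⟨s, _, hs⟩ := this
      exact ⟨s, hs⟩
    have hne : s.1 ≠ s.2 := by
      obtain ⟨F, hF⟩ := hs.exists
      rw [← hF]; exact ht1 F
    have hmem : (f s.1)⁻¹ * f s.2 ∈ H := by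
      rw [hHm]
      filter_upwards [hs] with F hF
      rw [← hF]; exact ht2 F
    have := QuotientGroup.eq.2 hmem
    simp only [f, QuotientGroup.out_eq'] at this
    exact hne (Fin.ext (e.injective this))
  · have key : ∀ a ∈ H, ∀ b ∈ H, ∀ c ∈ H, ∀ d ∈ H, ⁅⁅a, b⁆, ⁅c, d⁆⁆ = 1 := by
      intro a ha b hb c hc d hd
      by_contra hne
      have h1 : ∀ᶠ F in (U : Filter (Finset G)), ⁅⁅a, b⁆, ⁅c, d⁆⁆ ∈ F := by
        have : ∀ᶠ F : Finset G in Filter.atTop, {⁅⁅a, b⁆, ⁅c, d⁆⁆} ≤ F := Filter.eventually_ge_atTop _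
        have := (Ultrafilter.of_le Filter.atTop) this
        filter_upwards [this] with F hF
        exact hF (Finset.mem_singleton_self _)
      rw [hHm] at ha hb hc hd
      obtain ⟨F, h1, ha, hb, hc, hd⟩ := (h1.and (ha.and (hb.and (hc.and hd)))).exists
      exact hS3 F a ha b hb c hc d hd (Finset.mem_erase.2 ⟨hne, h1⟩)
    refine ⟨⟨2, ?_⟩⟩
    have hco : ∀ x ∈ derivedSeries H 1, ∀ y ∈ derivedSeries H 1, x * y = y * x := by
      have h1 : derivedSeries H 1 = Subgroup.closure {g | ∃ a b : H, ⁅a, b⁆ = g} := by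
        rw [derivedSeries_one, commutator_eq_closure]; rfl
      rw [h1]
      intro x hx y hy
      refine Subgroup.closure_induction₂ (p := fun x y _ _ => x * y = y * x) ?_ ?_ ?_ ?_ ?_ ?_ ?_ hx hy
      · rintro _ _ ⟨a, b, rfl⟩ ⟨c, d, rfl⟩
        rw [← commutatorElement_eq_one_iff_mul_comm]
        exact Subtype.ext (key a a.2 b b.2 c c.2 d d.2)
      · intro x _; simp
      · intro x _; simp
      · intro x y z _ _ _ h1 h2
        exact (Commute.mul_left h1 h2 : Commute (x * y) z)
      · intro x y z _ _ _ h1 h2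
        exact (Commute.mul_right h1 h2 : Commute _ _)
      · intro x y _ _ h1
        exact (Commute.inv_left h1 : Commute _ _)
      · intro x y _ _ h1
        exact (Commute.inv_right h1 : Commute _ _)
    rw [derivedSeries_succ, eq_bot_iff, Subgroup.commutator_le]
    intro x hx y hy
    rw [Subgroup.mem_bot, commutatorElement_eq_one_iff_mul_comm]
    exact hco x hx y hy

open NumberField in
theorem spec_zmod {X : Type u} [CommRing X] [CharZero X] (E : Set X) (hE : E.Finite) :
    ∃ (L : Type u) (_ : Field L) (_ : NumberField L) (M : ℕ), ∀ p : ℕ, p.Prime → M < p →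
      Nonempty (𝓞 L →+* ZMod p) → Nonempty (Algebra.adjoin ℤ E →+* ZMod p) := by
  classical
  obtain ⟨L, _, _, ⟨φ⟩⟩ := spec_nf E hE
  have hden : ∀ y : L, ∃ m : ℕ, m ≠ 0 ∧ ∃ a : 𝓞 L, (m : L) * y = algebraMap (𝓞 L) L a := by
    intro y
    have hy : IsAlgebraic ℤ y := (IsFractionRing.isAlgebraic_iff ℤ ℚ L).2 (Algebra.IsAlgebraic.isAlgebraic y)
    obtain ⟨m, hm, hi⟩ := hy.exists_integral_multiple
    refine ⟨m.natAbs, by simpa using hm, ?_⟩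
    have : IsIntegral ℤ ((m.natAbs : L) * y) := by
      rcases Int.natAbs_eq m with h | h
      · rw [h] at hi
        simpa using hi
      · rw [h] at hi
        simpa using hi.neg
    exact ⟨⟨_, this⟩, rfl⟩
  choose d hd0 a ha using hden
  have hfE : Finite E := hE
  have : Fintype E := Fintype.ofFinite _
  let e : E → Algebra.adjoin ℤ E := fun t => ⟨t.1, Algebra.subset_adjoin t.2⟩
  let m : ℕ := ∏ t : E, d (φ (e t))
  have hm0 : m ≠ 0 := Finset.prod_ne_zero_iff.2 fun t _ => hd0 _
  refine ⟨L, inferInstance, inferInstance, m, ?_⟩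
  intro p hp hmp ⟨ψ⟩
  have : Fact p.Prime := ⟨hp⟩
  let R' := Localization.Away (m : 𝓞 L)
  have hmL : IsUnit (algebraMap (𝓞 L) L (m : 𝓞 L)) := by
    rw [map_natCast, isUnit_iff_ne_zero]; exact_mod_cast hm0
  let i : R' →+* L := IsLocalization.Away.lift (m : 𝓞 L) hmL
  have hi : Function.Injective i := by
    have hlift := IsLocalization.lift_injective_iff (M := Submonoid.powers (m : 𝓞 L)) (S := R') (g := algebraMap (𝓞 L) L)
      (hg := fun y => by
        obtain ⟨k, hk⟩ := y.2
        rw [← hk]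
        simp only [map_pow]
        exact hmL.pow k)
    refine hlift.2 fun x y => ?_
    have hinj1 : Function.Injective (algebraMap (𝓞 L) R') := by
      apply IsLocalization.injective (M := Submonoid.powers (m : 𝓞 L))
      apply powers_le_nonZeroDivisors_of_noZeroDivisors
      exact_mod_cast hm0
    rw [hinj1.eq_iff, (FaithfulSMul.algebraMap_injective (𝓞 L) L).eq_iff]
  have hrange : ∀ x : Algebra.adjoin ℤ E, φ x ∈ i.range := by
    rintro ⟨x, hx⟩
    induction hx using Algebra.adjoin_induction with
    | mem x hx =>
      obtain ⟨q, hq⟩ := Finset.dvd_prod_of_mem (fun t : E => d (φ (e t))) (Finset.mem_univ ⟨x, hx⟩)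
      have hq : m = d (φ (e ⟨x, hx⟩)) * q := hq
      obtain ⟨u, hu⟩ := IsLocalization.Away.algebraMap_isUnit (S := R') (m : 𝓞 L)
      refine ⟨algebraMap (𝓞 L) R' (q * a (φ (e ⟨x, hx⟩))) * ((u⁻¹ : R'ˣ) : R'), ?_⟩
      have hmne : (m : L) ≠ 0 := by exact_mod_cast hm0
      have h1 : i (u : R') = m := by
        rw [hu]; simp [i]
      have h2 : i ((u⁻¹ : R'ˣ) : R') = (m : L)⁻¹ := by
        apply eq_inv_of_mul_eq_one_left; rw [← h1, ← map_mul]; simp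
      have h3 : i (algebraMap (𝓞 L) R' (q * a (φ (e ⟨x, hx⟩)))) = q * algebraMap (𝓞 L) L (a (φ (e ⟨x, hx⟩))) := by
        simp [i]
      rw [map_mul, h2, h3, ← ha]
      show _ = φ (e ⟨x, hx⟩)
      rw [mul_inv_eq_iff_eq_mul₀ hmne]
      have : (m : L) = (d (φ (e ⟨x, hx⟩)) : L) * q := by exact_mod_cast hq
      rw [this]; ring
    | algebraMap z =>
      refine ⟨algebraMap ℤ R' z, ?_⟩
      have : (⟨algebraMap ℤ X z, Subalgebra.algebraMap_mem _ z⟩ : Algebra.adjoin ℤ E) = algebraMap ℤ _ z := rfl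
      erw [this]
      simp
    | add x y hx hy h1 h2 =>
      have : (⟨x + y, add_mem hx hy⟩ : Algebra.adjoin ℤ E) = ⟨x, hx⟩ + ⟨y, hy⟩ := rfl
      rw [this, map_add]
      exact add_mem h1 h2
    | mul x y hx hy h1 h2 =>
      have : (⟨x * y, mul_mem hx hy⟩ : Algebra.adjoin ℤ E) = ⟨x, hx⟩ * ⟨y, hy⟩ := rfl
      rw [this, map_mul]
      exact mul_mem h1 h2
  have hmp' : IsUnit (ψ (m : 𝓞 L)) := by
    rw [map_natCast, isUnit_iff_ne_zero, Ne, ZMod.natCast_eq_zero_iff]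
    intro hdv
    have := Nat.le_of_dvd (Nat.pos_of_ne_zero hm0) hdv
    omega
  let ψ' : R' →+* ZMod p := IsLocalization.Away.lift (m : 𝓞 L) hmp'
  let eq := RingEquiv.ofBijective i.rangeRestrict ⟨fun x y h => hi (congrArg Subtype.val h), i.rangeRestrict_surjective⟩
  exact ⟨ψ'.comp (eq.symm.toRingHom.comp (φ.codRestrict i.range hrange))⟩

theorem ms_dvd {α R : Type*} [DecidableEq α] [CommSemiring R] (h : α → R) (m : Multiset α) :
    (m.map h).prod ∣ (∏ a ∈ m.toFinset, h a) ^ (m.card + 1) := by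
  rw [Finset.prod_multiset_map_count, ← Finset.prod_pow]
  apply Finset.prod_dvd_prod_of_dvd
  intro a _
  exact pow_dvd_pow _ ((Multiset.count_le_card a m).trans (Nat.le_succ _))

open Polynomial in
theorem gl_data {K : Type*} [Field K] [CharZero K] {n : ℕ} (g : GL (Fin n) K) :
    ∃ (R : Finset (AlgebraicClosure K)) (N : ℕ), 1 ≤ N ∧ (IsSemisimpleElt g → N = 1) ∧
      (aeval ((g : Matrix (Fin n) (Fin n) K).map (algebraMap K (AlgebraicClosure K)))
        (∏ μ ∈ R, (X - C μ))) ^ N = 0 := by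
  classical
  let Kb := AlgebraicClosure K
  let A : Matrix (Fin n) (Fin n) K := g
  let q : K[X] := minpoly K A
  let q' : Kb[X] := q.map (algebraMap K Kb)
  have hmon : q.Monic := minpoly.monic (Matrix.isIntegral A)
  have hq' : q'.Monic := hmon.map _
  have hz : aeval (A.map (algebraMap K Kb)) q' = 0 := by
    rw [Polynomial.aeval_map_algebraMap]
    have h1 : A.map (algebraMap K Kb) = (Algebra.ofId K Kb).mapMatrix A := rfl
    rw [h1, Polynomial.aeval_algHom_apply, minpoly.aeval, map_zero]
  have hsp : q' = (q'.roots.map fun a => X - C a).prod := by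
    have := (IsAlgClosed.splits q').eq_prod_roots
    rw [hq'.leadingCoeff, C_1, one_mul] at this
    exact this
  by_cases hs : IsSemisimpleElt g
  · refine ⟨q'.roots.toFinset, 1, le_rfl, fun _ => rfl, ?_⟩
    have h1 := Module.End.IsSemisimple.minpoly_squarefree hs
    have h2 : minpoly K ((g : Matrix (Fin n) (Fin n) K).mulVecLin) = q := by
      rw [← Matrix.toLin'_apply', Matrix.minpoly_toLin']
    rw [h2] at h1
    have h3 : q'.Separable := (PerfectField.separable_iff_squarefree.2 h1).map
    have h4 : q'.roots.Nodup := nodup_roots h3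
    rw [pow_one, ← hz, Finset.prod_eq_multiset_prod, Multiset.toFinset_val, h4.dedup]
    rw [← hsp]
  · refine ⟨q'.roots.toFinset, q'.roots.card + 1, by omega, fun h => absurd h hs, ?_⟩
    have h1 := ms_dvd (fun a : Kb => (X - C a : Kb[X])) q'.roots
    rw [← hsp] at h1
    obtain ⟨t, ht⟩ := h1
    rw [← map_pow, ht, map_mul]
    erw [hz]
    rw [zero_mul]

open Polynomial in
theorem pow_of_data {p n : ℕ} [hp : Fact p.Prime] (hn : 1 ≤ n) (u : GL (Fin n) (ZMod p)) {ι : Type*} (R : Finset ι)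
    (f : ι → ZMod p) (hf : ∀ a ∈ R, ∀ b ∈ R, f a = f b → a = b) (N : ℕ) (hN : N ≤ p) (hN1 : 1 ≤ N)
    (h : (aeval (u : Matrix (Fin n) (Fin n) (ZMod p)) (∏ μ ∈ R, (X - C (f μ)))) ^ N = 0) :
    u ^ (p * (p - 1)) = 1 ∧ (N = 1 → u ^ (p - 1) = 1) := by
  classical
  have : Nonempty (Fin n) := ⟨⟨0, hn⟩⟩
  set B : Matrix (Fin n) (Fin n) (ZMod p) := (u : Matrix (Fin n) (Fin n) (ZMod p)) with hB
  have hd : (∏ μ ∈ R, (X - C (f μ))) ∣ ((X : (ZMod p)[X]) ^ p - X) := by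
    apply Finset.prod_dvd_of_coprime
    · intro a ha b hb hab
      exact isCoprime_X_sub_C_of_isUnit_sub (sub_ne_zero.2 fun e => hab (hf a ha b hb e)).isUnit
    · intro a _
      rw [dvd_iff_isRoot, IsRoot, eval_sub, eval_pow, eval_X, ZMod.pow_card, sub_self]
  obtain ⟨t, ht⟩ := hd
  have h1 : aeval B ((X : (ZMod p)[X]) ^ p - X) = B ^ p - B := by simp
  have h2 : (B ^ p - B) ^ N = 0 := by
    rw [← h1, ht, map_mul, (Commute.map (Commute.all _ t) (aeval B)).mul_pow, h, zero_mul]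
  have p1 : p = (p - 1) + 1 := (Nat.succ_pred_eq_of_pos hp.1.pos).symm
  constructor
  · have h3 : (B ^ p - B) ^ p = 0 := pow_eq_zero_of_le hN h2
    rw [sub_pow_char_of_commute (p := p) ((Commute.refl B).pow_left p), sub_eq_zero, ← pow_mul] at h3
    have h4 : u ^ (p * p) = u ^ p := Units.ext h3
    have h5 : p * p = p * (p - 1) + p := by
      rw [← Nat.mul_succ, Nat.succ_eq_add_one, ← p1]
    rw [h5, pow_add] at h4
    exact mul_eq_right.1 h4
  · rintro rfl
    rw [pow_one, sub_eq_zero] at h2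
    have h4 : u ^ p = u := Units.ext h2
    have h5 : u ^ (p - 1) * u = u := by rw [← pow_succ, ← p1]; exact h4
    exact mul_eq_right.1 h5

theorem totient_small (ε : ℝ) (hε : 0 < ε) : ∃ Q : ℕ, 1 ≤ Q ∧ (Nat.totient Q : ℝ) < ε * Q := by
  have hns := not_summable_one_div_on_primes
  have htop := (not_summable_iff_tendsto_nat_atTop_of_nonneg (by
    intro n
    apply Set.indicator_nonneg
    intro x _
    positivity)).1 hns
  obtain ⟨N, hN⟩ := (htop.eventually (Filter.eventually_gt_atTop (-Real.log ε))).exists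
  refine ⟨N.factorial, N.factorial_pos, ?_⟩
  have h1 := Nat.totient_eq_mul_prod_factors N.factorial
  have h2 : ((Nat.totient N.factorial : ℕ) : ℝ) = (N.factorial : ℝ) * ∏ p ∈ N.factorial.primeFactors, (1 - (p : ℝ)⁻¹) := by
    have := congrArg (Rat.cast : ℚ → ℝ) h1
    push_cast at this
    exact this
  rw [h2, mul_comm]
  apply mul_lt_mul_of_pos_right _ (by exact_mod_cast N.factorial_pos)
  have h3 : ∏ p ∈ N.factorial.primeFactors, (1 - (p : ℝ)⁻¹) ≤ Real.exp (- ∑ p ∈ N.factorial.primeFactors, (p : ℝ)⁻¹) := by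
    rw [← Finset.sum_neg_distrib, Real.exp_sum]
    apply Finset.prod_le_prod
    · intro p hp
      have := (Nat.prime_of_mem_primeFactors hp).one_lt
      have h : (1:ℝ) ≤ p := by exact_mod_cast this.le
      have := inv_le_one_of_one_le₀ h
      linarith
    · intro p hp
      have := Real.add_one_le_exp (-(p:ℝ)⁻¹)
      linarith
  refine h3.trans_lt ?_
  rw [← Real.lt_log_iff_exp_lt hε]
  have h4 : ∑ i ∈ Finset.range N, {p : ℕ | Nat.Prime p}.indicator (fun n : ℕ => (1 : ℝ) / n) i ≤ ∑ p ∈ N.factorial.primeFactors, (p : ℝ)⁻¹ := by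
    rw [Finset.sum_indicator_eq_sum_filter]
    simp_rw [one_div]
    apply Finset.sum_le_sum_of_subset_of_nonneg
    · intro p hp
      simp only [Finset.mem_filter, Finset.mem_range, Set.mem_setOf_eq] at hp
      exact Nat.mem_primeFactors.2 ⟨hp.2, (hp.2.dvd_factorial).2 hp.1.le, N.factorial_ne_zero⟩
    · intros; positivity
  linarith

theorem abel_cmp (u w : ℕ → ℝ) (a b : ℝ) (hw : Antitone w) (hw0 : ∀ n, 0 ≤ w n)
    (h : ∀ N : ℕ, ∑ n ∈ Finset.range N, u n ≤ a * N + b) (N : ℕ) :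
    ∑ n ∈ Finset.range N, u n * w n ≤ a * ∑ n ∈ Finset.range N, w n + b * w 0 := by
  have key : w N * (a * N + b - ∑ n ∈ Finset.range N, u n) ≤
      a * ∑ n ∈ Finset.range N, w n + b * w 0 - ∑ n ∈ Finset.range N, u n * w n := by
    induction N with
    | zero => simp [mul_comm]
    | succ N ih =>
      rw [Finset.sum_range_succ, Finset.sum_range_succ (fun n => u n * w n), Finset.sum_range_succ w]
      have h1 := h (N + 1)
      rw [Finset.sum_range_succ] at h1
      have h2 : w (N + 1) * (a * (N + 1 : ℕ) + b - (∑ n ∈ Finset.range N, u n + u N)) ≤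
          w N * (a * (N + 1 : ℕ) + b - (∑ n ∈ Finset.range N, u n + u N)) :=
        mul_le_mul_of_nonneg_right (hw (Nat.le_succ N)) (by linarith)
      refine h2.trans ?_
      push_cast
      nlinarith [ih]
  have := mul_nonneg (hw0 N) (sub_nonneg.2 (h N))
  linarith

noncomputable def sj (j : ℕ) : ℝ := 1 + (1 / 2) ^ j

theorem sj_gt (j : ℕ) : 1 < sj j := by unfold sj; have : (0:ℝ) < (1/2)^j := by positivity
                                       linarith

theorem sj_tendsto : Filter.Tendsto sj Filter.atTop (nhdsWithin 1 (Set.Ioi 1)) := by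
  rw [tendsto_nhdsWithin_iff]
  refine ⟨?_, Filter.Eventually.of_forall fun j => sj_gt j⟩
  have : Filter.Tendsto (fun j : ℕ => (1:ℝ) + (1/2)^j) Filter.atTop (nhds (1 + 0)) :=
    tendsto_const_nhds.add (tendsto_pow_atTop_nhds_zero_of_lt_one (by norm_num) (by norm_num))
  rw [add_zero] at this
  exact this

theorem sj_step (n : ℕ) (hn : 1 ≤ n) (j : ℕ) :
    (n : ℝ) ^ (-(sj (j + 1))) ≤ (n : ℝ) ^ (-(sj j)) + (1 / 2) ^ (j + 1) * (Real.log n * (n : ℝ) ^ (-(sj (j + 1)))) := by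
  have hn0 : (0 : ℝ) < n := by exact_mod_cast hn
  have e : -(sj j) = -(sj (j + 1)) + -((1 / 2) ^ (j + 1)) := by
    unfold sj; rw [pow_succ]; ring
  rw [e, Real.rpow_add hn0]
  have h1 : 1 - (1 / 2 : ℝ) ^ (j + 1) * Real.log n ≤ (n : ℝ) ^ (-((1 / 2 : ℝ) ^ (j + 1))) := by
    rw [Real.rpow_def_of_pos hn0]
    have := Real.add_one_le_exp (Real.log n * -((1 / 2 : ℝ) ^ (j + 1)))
    linarith
  have h2 : (0:ℝ) ≤ (n : ℝ) ^ (-(sj (j + 1))) := Real.rpow_nonneg hn0.le _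
  nlinarith [mul_le_mul_of_nonneg_left h1 h2]

theorem analytic_upper (S : ℕ → Prop) [DecidablePred S] (a b : ℝ) (ha : 0 ≤ a) (hb : 0 ≤ b)
    (hS : ∀ N : ℕ, ∑ n ∈ Finset.range N, (if S n then Real.log n else 0) ≤ a * N + b) :
    ∃ c : ℝ, ∃ j0 : ℕ, ∀ j ≥ j0, ∀ X : ℕ,
      ∑ n ∈ Finset.range X, (if S (n+1) then ((n + 1 : ℕ) : ℝ) ^ (-(sj j)) else 0) ≤ 2 * a * j + c := by
  have hz := tendsto_sub_mul_tsum_nat_rpow.comp sj_tendsto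
  have hev := hz.eventually (eventually_lt_nhds (show (1:ℝ) < 2 by norm_num))
  obtain ⟨j0, hj0⟩ := Filter.eventually_atTop.1 hev
  have hsumm : ∀ j, Summable fun n : ℕ => 1 / (n : ℝ) ^ (sj j) := fun j =>
    Real.summable_one_div_nat_rpow.2 (sj_gt j)
  have hrew : ∀ j (n : ℕ), ((n + 1 : ℕ) : ℝ) ^ (-(sj j)) = 1 / ((n + 1 : ℕ) : ℝ) ^ (sj j) := by
    intro j n
    rw [Real.rpow_neg (by positivity), one_div]
  have hfin : ∀ j X, ∑ n ∈ Finset.range X, ((n + 1 : ℕ) : ℝ) ^ (-(sj j)) ≤ ∑' n : ℕ, 1 / (n : ℝ) ^ (sj j) := by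
    intro j X
    simp_rw [hrew]
    have h1 := (hsumm j).sum_le_tsum (Finset.range (X + 1)) (fun n _ => by positivity)
    rw [Finset.sum_range_succ'] at h1
    have : (0:ℝ) ≤ 1 / ((0 : ℕ) : ℝ) ^ (sj j) := by positivity
    linarith
  have hlog : ∀ j, j0 ≤ j → ∀ X : ℕ, ∑ n ∈ Finset.range X, (if S (n+1) then Real.log (n + 1 : ℕ) else 0) * ((n + 1 : ℕ) : ℝ) ^ (-(sj j)) ≤ a * (2 * 2 ^ j) + (a + b) := by
    intro j hj X
    have h1 := abel_cmp (fun n => if S (n+1) then Real.log (n + 1 : ℕ) else 0) (fun n => ((n + 1 : ℕ) : ℝ) ^ (-(sj j))) a (a + b)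
      (by
        intro m n hmn
        apply Real.rpow_le_rpow_of_nonpos (by positivity)
        · exact_mod_cast Nat.succ_le_succ hmn
        · linarith [sj_gt j])
      (fun n => by positivity)
      (by
        intro N
        have := hS (N + 1)
        rw [Finset.sum_range_succ'] at this
        have h0 : (if S 0 then Real.log (0 : ℕ) else 0) = 0 := by simp
        rw [h0] at this
        push_cast at this ⊢
        linarith) X
    refine h1.trans ?_
    have h2 : ∑ n ∈ Finset.range X, ((n + 1 : ℕ) : ℝ) ^ (-(sj j)) ≤ 2 * 2 ^ j := by
      refine (hfin j X).trans ?_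
      have h3 := hj0 j hj
      simp only [Function.comp] at h3
      have e : sj j - 1 = (1/2)^j := by unfold sj; ring
      rw [e, one_div, inv_pow, inv_mul_lt_iff₀ (by positivity)] at h3
      linarith
    have h4 : ((0 + 1 : ℕ) : ℝ) ^ (-(sj j)) = 1 := by simp
    rw [h4]
    have := mul_le_mul_of_nonneg_left h2 ha
    linarith
  refine ⟨∑' n : ℕ, 1 / (n : ℝ) ^ (sj j0) + (a + b), j0, ?_⟩
  intro j hj X
  have main : ∑ n ∈ Finset.range X, (if S (n+1) then ((n + 1 : ℕ) : ℝ) ^ (-(sj j)) else 0) ≤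
      ∑' n : ℕ, 1 / (n : ℝ) ^ (sj j0) + 2 * a * (j - j0 : ℝ) + (a + b) * ((1/2)^j0 - (1 / 2) ^ j) := by
    induction j, hj using Nat.le_induction with
    | base =>
      have : ∑ n ∈ Finset.range X, (if S (n+1) then ((n + 1 : ℕ) : ℝ) ^ (-(sj j0)) else 0) ≤
          ∑ n ∈ Finset.range X, ((n + 1 : ℕ) : ℝ) ^ (-(sj j0)) := by
        apply Finset.sum_le_sum
        intro n _
        split_ifs
        · exact le_rfl
        · positivity
      have := this.trans (hfin j0 X)
      simpa using this
    | succ j hj ih =>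
      have h1 := hlog (j + 1) (by omega) X
      have h2 : ∑ n ∈ Finset.range X, (if S (n+1) then ((n + 1 : ℕ) : ℝ) ^ (-(sj (j+1))) else 0) ≤
          ∑ n ∈ Finset.range X, (if S (n+1) then ((n + 1 : ℕ) : ℝ) ^ (-(sj j)) else 0) +
          (1 / 2) ^ (j + 1) * ∑ n ∈ Finset.range X, (if S (n+1) then Real.log (n + 1 : ℕ) else 0) * ((n + 1 : ℕ) : ℝ) ^ (-(sj (j+1))) := by
        rw [Finset.mul_sum, ← Finset.sum_add_distrib]
        apply Finset.sum_le_sum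
        intro n _
        split_ifs
        · exact sj_step (n + 1) (by omega) j
        · simp
      have h3 : (1 / 2 : ℝ) ^ (j + 1) * ∑ n ∈ Finset.range X, (if S (n+1) then Real.log (n + 1 : ℕ) else 0) * ((n + 1 : ℕ) : ℝ) ^ (-(sj (j+1))) ≤ 2 * a + (a + b) * (1 / 2) ^ (j + 1) := by
        refine (mul_le_mul_of_nonneg_left h1 (by positivity)).trans (le_of_eq ?_)
        have : (1 / 2 : ℝ) ^ (j + 1) * 2 ^ (j + 1) = 1 := by rw [← mul_pow]; norm_num
        linear_combination (2 * a) * this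
      have e : (1 / 2 : ℝ) ^ j = 2 * (1/2) ^ (j + 1) := by rw [pow_succ]; ring
      rw [e] at ih
      have hc : ((j + 1 : ℕ) : ℝ) = j + 1 := by push_cast; ring
      rw [hc]
      linarith
  refine main.trans ?_
  have h1 : (1 / 2 : ℝ) ^ j0 ≤ 1 := pow_le_one₀ (by norm_num) (by norm_num)
  have h2 : (0:ℝ) ≤ (1 / 2 : ℝ) ^ j := by positivity
  have h3 : (0:ℝ) ≤ j0 := by positivity
  have h4 : (a + b) * ((1/2)^j0 - (1 / 2) ^ j) ≤ (a + b) * 1 := mul_le_mul_of_nonneg_left (by linarith) (by linarith)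
  nlinarith [mul_nonneg ha h3]

theorem euler_fin {R : Type*} [CommRing R] [IsDedekindDomain R] (w : Ideal R →* ENNReal)
    (T : Finset (Ideal R)) (hT : ∀ P ∈ T, Prime P) :
    ∑' I : {I : Ideal R // I ≠ 0 ∧ ∀ P, Prime P → P ∣ I → P ∈ T}, w I.1 ≤ ∏ P ∈ T, (1 - w P)⁻¹ := by
  classical
  induction T using Finset.induction_on with
  | empty =>
    have hsub : Subsingleton {I : Ideal R // I ≠ 0 ∧ ∀ P, Prime P → P ∣ I → P ∈ (∅ : Finset (Ideal R))} := by
      have key : ∀ I : Ideal R, (I ≠ 0 ∧ ∀ P, Prime P → P ∣ I → P ∈ (∅ : Finset (Ideal R))) → I = 1 := by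
        rintro I ⟨h0, h1⟩
        by_contra hne
        have hu : ¬ IsUnit I := by rwa [Ideal.isUnit_iff, ← Ideal.one_eq_top]
        obtain ⟨P, hP, hd⟩ := WfDvdMonoid.exists_irreducible_factor hu h0
        simpa using h1 P hP.prime hd
      constructor
      rintro ⟨I, hI⟩ ⟨J, hJ⟩
      exact Subtype.ext ((key I hI).trans (key J hJ).symm)
    have h1 : (1 : Ideal R) ≠ 0 ∧ ∀ P, Prime P → P ∣ (1 : Ideal R) → P ∈ (∅ : Finset (Ideal R)) :=
      ⟨one_ne_zero, fun P hP hd => absurd (isUnit_of_dvd_one hd) hP.not_isUnit⟩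
    rw [tsum_eq_single (⟨1, h1⟩ : {I : Ideal R // I ≠ 0 ∧ ∀ P, Prime P → P ∣ I → P ∈ (∅ : Finset (Ideal R))}) (fun b hb => absurd (Subsingleton.elim _ _) hb)]
    rw [Finset.prod_empty]
    exact (map_one w).le
  | insert P T hPT ih =>
    have hP : Prime P := hT P (Finset.mem_insert_self _ _)
    have ih' := ih (fun Q hQ => hT Q (Finset.mem_insert_of_mem hQ))
    rw [Finset.prod_insert hPT]
    let f : ℕ × {I : Ideal R // I ≠ 0 ∧ ∀ P, Prime P → P ∣ I → P ∈ T} →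
        {I : Ideal R // I ≠ 0 ∧ ∀ Q, Prime Q → Q ∣ I → Q ∈ insert P T} := fun x =>
      ⟨P ^ x.1 * x.2.1, mul_ne_zero (pow_ne_zero _ hP.ne_zero) x.2.2.1, by
        intro Q hQ hd
        rcases hQ.dvd_or_dvd hd with h | h
        · have := (hQ.dvd_prime_iff_associated hP).1 (hQ.dvd_of_dvd_pow h)
          rw [associated_iff_eq.1 this]
          exact Finset.mem_insert_self _ _
        · exact Finset.mem_insert_of_mem (x.2.2.2 Q hQ h)⟩
    have hf : Function.Surjective f := by
      rintro ⟨I, h0, h1⟩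
      obtain ⟨c, hc, hnd⟩ := (FiniteMultiplicity.of_prime_left hP h0).exists_eq_pow_mul_and_not_dvd
      refine ⟨(multiplicity P I, ⟨c, ?_, ?_⟩), Subtype.ext hc.symm⟩
      · rintro rfl
        exact hnd (dvd_zero _)
      · intro Q hQ hd
        rcases Finset.mem_insert.1 (h1 Q hQ (hc ▸ hd.mul_left _)) with h | h
        · exact absurd (h ▸ hd) hnd
        · exact h
    refine (ENNReal.tsum_le_tsum_comp_of_surjective hf _).trans ?_
    rw [ENNReal.tsum_prod']
    simp only [f, map_mul, map_pow]
    simp_rw [ENNReal.tsum_mul_left, ENNReal.tsum_mul_right, ENNReal.tsum_geometric]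
    gcongr

theorem euler_real {R : Type*} [CommRing R] [IsDedekindDomain R] (x : Ideal R →* ℝ)
    (hx0 : ∀ I, 0 ≤ x I) (hx : ∀ P, Prime P → x P ≤ 1 / 2)
    (F : Finset (Ideal R)) (hF : ∀ I ∈ F, I ≠ 0) :
    ∃ T : Finset (Ideal R), (∀ P ∈ T, Prime P) ∧
      ∑ I ∈ F, x I ≤ Real.exp (∑ P ∈ T, (x P + 2 * x P ^ 2)) := by
  classical
  let T := F.biUnion fun I => (UniqueFactorizationMonoid.normalizedFactors I).toFinset
  have hT : ∀ P ∈ T, Prime P := by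
    intro P hP
    obtain ⟨I, hI, h⟩ := Finset.mem_biUnion.1 hP
    exact UniqueFactorizationMonoid.prime_of_normalized_factor P (Multiset.mem_toFinset.1 h)
  refine ⟨T, hT, ?_⟩
  let w : Ideal R →* ENNReal :=
    { toFun := fun I => ENNReal.ofReal (x I)
      map_one' := by rw [map_one, ENNReal.ofReal_one]
      map_mul' := fun I J => by rw [map_mul, ENNReal.ofReal_mul (hx0 I)] }
  have h1 := euler_fin w T hT
  have h2 : ∑ I ∈ F, w I ≤ ∑' I : {I : Ideal R // I ≠ 0 ∧ ∀ P, Prime P → P ∣ I → P ∈ T}, w I.1 := by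
    have hmem : ∀ I ∈ F, I ≠ 0 ∧ ∀ P, Prime P → P ∣ I → P ∈ T := by
      intro I hI
      refine ⟨hF I hI, fun P hP hd => Finset.mem_biUnion.2 ⟨I, hI, ?_⟩⟩
      rw [Multiset.mem_toFinset]
      obtain ⟨Q, hQ, ha⟩ := UniqueFactorizationMonoid.exists_mem_normalizedFactors_of_dvd (hF I hI) hP.irreducible hd
      rwa [associated_iff_eq.1 ha]
    let g : F → {I : Ideal R // I ≠ 0 ∧ ∀ P, Prime P → P ∣ I → P ∈ T} := fun I => ⟨I.1, hmem I.1 I.2⟩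
    have hg : Function.Injective g := fun a b h => Subtype.ext (congrArg (fun z => z.1) h)
    have := ENNReal.tsum_comp_le_tsum_of_injective hg (fun I => w I.1)
    rw [tsum_fintype] at this
    rw [← Finset.sum_coe_sort]
    exact this
  have h3 : ∏ P ∈ T, (1 - w P)⁻¹ ≤ ENNReal.ofReal (Real.exp (∑ P ∈ T, (x P + 2 * x P ^ 2))) := by
    rw [Real.exp_sum, ENNReal.ofReal_prod_of_nonneg (fun _ _ => (Real.exp_pos _).le)]
    apply Finset.prod_le_prod'
    intro P hP
    have a0 := hx0 P
    have a1 := hx P (hT P hP)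
    have : w P = ENNReal.ofReal (x P) := rfl
    rw [this, ← ENNReal.ofReal_one, ← ENNReal.ofReal_sub _ a0, ← ENNReal.ofReal_inv_of_pos (by linarith)]
    apply ENNReal.ofReal_le_ofReal
    have := Real.add_one_le_exp (x P + 2 * x P ^ 2)
    refine le_trans ?_ this
    rw [inv_le_iff_one_le_mul₀ (by linarith)]
    nlinarith [mul_nonneg (sq_nonneg (x P)) (sub_nonneg.2 a1)]
  have h4 := (h2.trans h1).trans h3
  have h5 : ∑ I ∈ F, w I = ENNReal.ofReal (∑ I ∈ F, x I) := by
    rw [ENNReal.ofReal_sum_of_nonneg (fun _ _ => hx0 _)]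
    rfl
  rw [h5] at h4
  exact (ENNReal.ofReal_le_ofReal_iff (Real.exp_pos _).le).1 h4

open NumberField in
theorem prime_below (L : Type*) [Field L] [NumberField L] (P : Ideal (𝓞 L)) (hP : Prime P) :
    (Ideal.absNorm (Ideal.under ℤ P)).Prime ∧
    ((Ideal.absNorm P = Ideal.absNorm (Ideal.under ℤ P) ∧
        Nonempty (𝓞 L →+* ZMod (Ideal.absNorm (Ideal.under ℤ P)))) ∨
      (Ideal.absNorm (Ideal.under ℤ P)) ^ 2 ≤ Ideal.absNorm P) := by
  haveI : P.IsPrime := Ideal.isPrime_of_prime hP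
  haveI : NeZero P := ⟨hP.ne_zero⟩
  have hp := Nat.absNorm_under_prime P
  refine ⟨hp, ?_⟩
  have hN := Ideal.absNorm_eq_pow_inertiaDeg' P hp
  set p := Ideal.absNorm (Ideal.under ℤ P) with hpdef
  set f := (Ideal.span {(p : ℤ)}).inertiaDeg' P
  have hN1 : Ideal.absNorm P ≠ 1 := by
    rw [Ne, Ideal.absNorm_eq_one_iff]
    exact Ideal.IsPrime.ne_top'
  rcases Nat.lt_or_ge f 2 with hf | hf
  · left
    have hf1 : f = 1 := by
      rcases Nat.eq_zero_or_pos f with h | h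
      · rw [h, pow_zero] at hN; exact absurd hN hN1
      · omega
    rw [hf1, pow_one] at hN
    refine ⟨hN, ?_⟩
    have hc : Nat.card (𝓞 L ⧸ P) = p := by
      rw [← hN, Ideal.absNorm_apply, Submodule.cardQuot_apply]
    haveI : Finite (𝓞 L ⧸ P) := Nat.finite_of_card_ne_zero (by rw [hc]; exact hp.ne_zero)
    haveI := Fintype.ofFinite (𝓞 L ⧸ P)
    rw [Nat.card_eq_fintype_card] at hc
    exact ⟨((ZMod.ringEquivOfPrime (𝓞 L ⧸ P) hp hc).symm : (𝓞 L ⧸ P) →+* ZMod p).comp (Ideal.Quotient.mk P)⟩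
  · right
    rw [hN]
    exact Nat.pow_le_pow_right hp.pos hf

open NumberField in
theorem card_over (L : Type*) [Field L] [NumberField L] (T : Finset (Ideal (𝓞 L))) (hT : ∀ P ∈ T, Prime P)
    (p : ℕ) (hp : p.Prime) [DecidableEq ℕ] :
    (T.filter fun P => Ideal.absNorm (Ideal.under ℤ P) = p).card ≤ Module.finrank ℚ L := by
  classical
  haveI : Fact p.Prime := ⟨hp⟩
  have hp0 : Ideal.span {(p : ℤ)} ≠ ⊥ := by
    simp [hp.ne_zero]
  have h1 := Ideal.card_primesOverFinset_le_finrank (R := ℤ) (S := 𝓞 L) ℚ L hp0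
  refine le_trans (Finset.card_le_card ?_) h1
  intro P hP
  rw [Finset.mem_filter] at hP
  rw [IsDedekindDomain.mem_primesOverFinset_iff hp0]
  refine ⟨Ideal.isPrime_of_prime (hT P hP.1), ?_⟩
  have := Int.liesOver_span_absNorm P
  rwa [hP.2] at this

open NumberField in
theorem sum_bound (L : Type*) [Field L] [NumberField L] (S : ℕ → Prop) [DecidablePred S]
    (hS : ∀ p : ℕ, p.Prime → Nonempty (𝓞 L →+* ZMod p) → S p) (s : ℝ) (hs : 1 < s)
    (T : Finset (Ideal (𝓞 L))) (hT : ∀ P ∈ T, Prime P) :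
    ∃ X : ℕ, ∑ P ∈ T, (((Ideal.absNorm P : ℕ) : ℝ) ^ (-s) + 2 * (((Ideal.absNorm P : ℕ) : ℝ) ^ (-s)) ^ 2) ≤
      Module.finrank ℚ L * (∑ n ∈ Finset.range X, (if S (n+1) then ((n + 1 : ℕ) : ℝ) ^ (-s) else 0) +
        3 * ∑' n : ℕ, 1 / (n : ℝ) ^ 2) := by
  classical
  let q : Ideal (𝓞 L) → ℕ := fun P => Ideal.absNorm (Ideal.under ℤ P)
  let g : ℕ → ℝ := fun n => (if S n then (n : ℝ) ^ (-s) else 0) + 3 * (1 / (n : ℝ) ^ 2)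
  have hg0 : ∀ n, 0 ≤ g n := fun n => by
    have : 0 ≤ (if S n then (n : ℝ) ^ (-s) else 0) := by split_ifs <;> positivity
    have h2 : (0:ℝ) ≤ 3 * (1 / (n : ℝ) ^ 2) := by positivity
    exact add_nonneg this h2
  have hle : ∀ P ∈ T, (((Ideal.absNorm P : ℕ) : ℝ) ^ (-s) + 2 * (((Ideal.absNorm P : ℕ) : ℝ) ^ (-s)) ^ 2) ≤ g (q P) := by
    intro P hP
    obtain ⟨hp, h⟩ := prime_below L P (hT P hP)
    have hp1 : (1:ℝ) ≤ (q P : ℝ) := by exact_mod_cast hp.one_lt.le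
    have hpow : ∀ y : ℝ, 1 ≤ y → y ^ (-s) ≤ y⁻¹ := by
      intro y hy
      rw [← Real.rpow_neg_one]
      exact Real.rpow_le_rpow_of_exponent_le hy (by linarith)
    rcases h with ⟨h1, h2⟩ | h1
    · have hSq : S (q P) := hS _ hp h2
      rw [h1]
      change ((q P : ℕ) : ℝ) ^ (-s) + 2 * (((q P : ℕ) : ℝ) ^ (-s)) ^ 2 ≤ g (q P)
      simp only [g, if_pos hSq]
      have h3 := hpow _ hp1
      have h4 : (0:ℝ) ≤ (q P : ℝ) ^ (-s) := by positivity
      have h5 : ((q P : ℝ) ^ (-s)) ^ 2 ≤ ((q P : ℝ)⁻¹) ^ 2 := pow_le_pow_left₀ h4 h3 2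
      rw [inv_pow] at h5
      have h6 : (0:ℝ) ≤ ((q P : ℝ) ^ 2)⁻¹ := by positivity
      rw [one_div]
      linarith
    · have h1' : ((q P : ℕ) : ℝ) ^ 2 ≤ (Ideal.absNorm P : ℕ) := by exact_mod_cast h1
      have hq2 : (1:ℝ) ≤ ((q P : ℕ) : ℝ) ^ 2 := one_le_pow₀ hp1
      have h3 := hpow _ (hq2.trans h1')
      have h4 : (((Ideal.absNorm P : ℕ) : ℝ))⁻¹ ≤ (((q P : ℕ) : ℝ) ^ 2)⁻¹ := inv_anti₀ (by positivity) h1'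
      have h5 : (((q P : ℕ) : ℝ) ^ 2)⁻¹ ≤ 1 := inv_le_one_of_one_le₀ hq2
      have h6 : (0:ℝ) ≤ ((Ideal.absNorm P : ℕ) : ℝ) ^ (-s) := by positivity
      have h7 : 0 ≤ (if S (q P) then (q P : ℝ) ^ (-s) else 0) := by split_ifs <;> positivity
      simp only [g]
      rw [one_div]
      nlinarith
  let X := (T.sup q) + 1
  refine ⟨X, (Finset.sum_le_sum hle).trans ?_⟩
  have h1 : ∑ P ∈ T, g (q P) = ∑ n ∈ T.image q, ((T.filter fun P => q P = n).card : ℝ) * g n := by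
    rw [← Finset.sum_fiberwise_of_maps_to (g := q) (t := T.image q) (fun P hP => Finset.mem_image_of_mem q hP)]
    apply Finset.sum_congr rfl
    intro n _
    rw [Finset.sum_congr rfl (g := fun _ => g n) (fun P hP => by rw [(Finset.mem_filter.1 hP).2]), Finset.sum_const, nsmul_eq_mul]
  have h2 : ∑ n ∈ T.image q, ((T.filter fun P => q P = n).card : ℝ) * g n ≤ Module.finrank ℚ L * ∑ n ∈ T.image q, g n := by
    rw [Finset.mul_sum]
    apply Finset.sum_le_sum
    intro n hn
    apply mul_le_mul_of_nonneg_right _ (hg0 n)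
    obtain ⟨P, hP, rfl⟩ := Finset.mem_image.1 hn
    exact_mod_cast card_over L T hT (q P) (prime_below L P (hT P hP)).1
  rw [h1]
  refine h2.trans (mul_le_mul_of_nonneg_left ?_ (by positivity))
  have h3 : ∑ n ∈ T.image q, g n ≤ ∑ n ∈ Finset.range X, g (n + 1) := by
    have e : ∑ n ∈ Finset.range X, g (n + 1) = ∑ n ∈ (Finset.range X).image (· + 1), g n := by
      rw [Finset.sum_image (fun a _ b _ h => by simpa using h)]
    rw [e]
    apply Finset.sum_le_sum_of_subset_of_nonneg
    · intro n hn
      obtain ⟨P, hP, rfl⟩ := Finset.mem_image.1 hn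
      have hpos := (prime_below L P (hT P hP)).1.pos
      have hle : q P ≤ T.sup q := Finset.le_sup hP
      refine Finset.mem_image.2 ⟨q P - 1, Finset.mem_range.2 ?_, ?_⟩
      · simp only [X]; omega
      · change q P - 1 + 1 = q P
        have : 0 < q P := hpos
        omega
    · intro n _ _; exact hg0 n
  refine h3.trans ?_
  simp only [g]
  rw [Finset.sum_add_distrib, ← Finset.mul_sum]
  have hsum : Summable fun n : ℕ => 1 / (n : ℝ) ^ 2 := Real.summable_one_div_nat_pow.2 (by norm_num)
  have h4 := hsum.sum_le_tsum (Finset.range (X + 1)) (fun n _ => by positivity)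
  rw [Finset.sum_range_succ'] at h4
  have h5 : (0:ℝ) ≤ 1 / ((0 : ℕ) : ℝ) ^ 2 := by positivity
  linarith

open NumberField in
theorem zeta_finite (L : Type*) [Field L] [NumberField L] :
    ∃ κ : ℝ, 0 < κ ∧ ∃ j0 : ℕ, ∀ j ≥ j0, ∃ F : Finset (Ideal (𝓞 L)), (∀ I ∈ F, I ≠ 0) ∧
      κ * 2 ^ j ≤ ∑ I ∈ F, ((Ideal.absNorm I : ℕ) : ℝ) ^ (-(sj j)) := by
  classical
  have hpos := dedekindZeta_residue_pos L
  have hlim := ((tendsto_sub_one_mul_dedekindZeta_nhdsGT L).comp sj_tendsto).norm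
  have hev := hlim.eventually (eventually_gt_nhds (b := dedekindZeta_residue L / 2) (by
    rw [Complex.norm_real, Real.norm_of_nonneg hpos.le]; linarith))
  obtain ⟨j0, hj0⟩ := Filter.eventually_atTop.1 hev
  refine ⟨dedekindZeta_residue L / 2, by linarith, j0, fun j hj => ?_⟩
  have h1 := hj0 j hj
  simp only [Function.comp] at h1
  have e : ((sj j : ℝ) : ℂ) - 1 = (((1/2 : ℝ)^j : ℝ) : ℂ) := by unfold sj; push_cast; ring
  rw [norm_mul, e, Complex.norm_real, Real.norm_of_nonneg (by positivity), one_div, inv_pow,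
    lt_inv_mul_iff₀ (by positivity)] at h1
  set B := dedekindZeta_residue L / 2 with hB
  set a : ℕ → ℂ := fun n ↦ (Nat.card {I : Ideal (𝓞 L) // Ideal.absNorm I = n} : ℂ) with ha
  have hz : dedekindZeta L (sj j) = ∑' n, LSeries.term a (sj j) n := rfl
  rw [hz] at h1
  have hsumm : Summable (LSeries.term a (sj j)) := by
    by_contra hn
    rw [tsum_eq_zero_of_not_summable hn, norm_zero] at h1
    have : (0:ℝ) < 2 ^ j * B := by positivity
    linarith
  have h2 := hsumm.hasSum.norm.eventually (eventually_gt_nhds h1)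
  obtain ⟨G, hG⟩ := h2.exists
  have hfin : ∀ n, {I : Ideal (𝓞 L) | Ideal.absNorm I = n}.Finite := fun n => Ideal.finite_setOfPred_absNorm_eq n
  let F := (G.erase 0).biUnion fun n => (hfin n).toFinset
  refine ⟨F, ?_, ?_⟩
  · intro I hI
    obtain ⟨n, hn, hIn⟩ := Finset.mem_biUnion.1 hI
    have hIn' : Ideal.absNorm I = n := by simpa using hIn
    rintro rfl
    have : n ≠ 0 := Finset.ne_of_mem_erase hn
    apply this
    rw [← hIn']
    exact map_zero _
  · have h3 : ‖∑ n ∈ G, LSeries.term a (sj j) n‖ ≤ ∑ n ∈ G, ‖LSeries.term a (sj j) n‖ := norm_sum_le _ _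
    have h4 : ∑ n ∈ G, ‖LSeries.term a (sj j) n‖ = ∑ I ∈ F, ((Ideal.absNorm I : ℕ) : ℝ) ^ (-(sj j)) := by
      rw [Finset.sum_biUnion]
      · rw [← Finset.sum_erase G (a := 0) (by simp)]
        apply Finset.sum_congr rfl
        intro n hn
        have hn0 : n ≠ 0 := Finset.ne_of_mem_erase hn
        rw [LSeries.norm_term_eq, if_neg hn0]
        rw [Finset.sum_congr rfl (g := fun _ => (n : ℝ) ^ (-(sj j))) (fun I hI => by
          have hIn' : Ideal.absNorm I = n := by simpa using hI
          rw [hIn']), Finset.sum_const, nsmul_eq_mul, Complex.ofReal_re, Real.rpow_neg (by positivity), ← div_eq_mul_inv]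
        congr 1
        simp only [ha, Complex.norm_natCast]
        congr 1
        rw [← Set.ncard_eq_toFinset_card _ (hfin n)]
        rfl
      · intro m _ n _ hmn
        rw [Function.onFun, Finset.disjoint_left]
        intro I h5 h6
        apply hmn
        have h5' : Ideal.absNorm I = m := by simpa using h5
        have h6' : Ideal.absNorm I = n := by simpa using h6
        rw [← h5', h6']
    rw [← h4]
    rw [mul_comm]
    exact hG.le.trans h3

open NumberField in
theorem zeta_lower (L : Type*) [Field L] [NumberField L] (S : ℕ → Prop) [DecidablePred S]
    (hS : ∀ p : ℕ, p.Prime → Nonempty (𝓞 L →+* ZMod p) → S p) :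
    ∃ c : ℝ, ∃ j0 : ℕ, ∀ j ≥ j0, ∃ X : ℕ, j * Real.log 2 - c ≤
      Module.finrank ℚ L * ∑ n ∈ Finset.range X, (if S (n+1) then ((n + 1 : ℕ) : ℝ) ^ (-(sj j)) else 0) := by
  obtain ⟨κ, hκ, j0, h⟩ := zeta_finite L
  refine ⟨Module.finrank ℚ L * (3 * ∑' n : ℕ, 1 / (n : ℝ) ^ 2) - Real.log κ, j0, fun j hj => ?_⟩
  obtain ⟨F, hF, h1⟩ := h j hj
  have hs := sj_gt j
  let x : Ideal (𝓞 L) →* ℝ :=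
    { toFun := fun I => ((Ideal.absNorm I : ℕ) : ℝ) ^ (-(sj j))
      map_one' := by rw [map_one]; simp
      map_mul' := fun I J => by
        rw [map_mul, Nat.cast_mul, Real.mul_rpow (by positivity) (by positivity)] }
  obtain ⟨T, hT, h2⟩ := euler_real x (fun I => by change (0:ℝ) ≤ ((Ideal.absNorm I : ℕ) : ℝ) ^ (-(sj j)); positivity)
    (by
      intro P hP
      change ((Ideal.absNorm P : ℕ) : ℝ) ^ (-(sj j)) ≤ 1 / 2
      have h0 : Ideal.absNorm P ≠ 0 := by
        rw [Ne, Ideal.absNorm_eq_zero_iff]; exact hP.ne_zero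
      have h1 : Ideal.absNorm P ≠ 1 := by
        rw [Ne, Ideal.absNorm_eq_one_iff]; exact (Ideal.isPrime_of_prime hP).ne_top
      have h2 : (2:ℝ) ≤ (Ideal.absNorm P : ℕ) := by
        have : 2 ≤ Ideal.absNorm P := by omega
        exact_mod_cast this
      calc ((Ideal.absNorm P : ℕ) : ℝ) ^ (-(sj j)) ≤ ((Ideal.absNorm P : ℕ) : ℝ) ^ (-1 : ℝ) :=
            Real.rpow_le_rpow_of_exponent_le (by linarith) (by linarith)
        _ = ((Ideal.absNorm P : ℕ) : ℝ)⁻¹ := Real.rpow_neg_one _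
        _ ≤ 1 / 2 := by rw [one_div]; exact inv_anti₀ (by norm_num) h2) F hF
  obtain ⟨X, h3⟩ := sum_bound L S hS (sj j) hs T hT
  refine ⟨X, ?_⟩
  have h4 : κ * 2 ^ j ≤ Real.exp (∑ P ∈ T, (x P + 2 * x P ^ 2)) := h1.trans h2
  rw [← Real.log_le_iff_le_exp (by positivity), Real.log_mul hκ.ne' (by positivity), Real.log_pow] at h4
  have h5 := h4.trans h3
  linarith

open NumberField in
theorem cyc_ext (L : Type u) [Field L] [NumberField L] (Q : ℕ) (hQ : 1 ≤ Q) :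
    ∃ (L' : Type u) (_ : Field L') (_ : NumberField L'),
      Module.finrank ℚ L' ≤ Module.finrank ℚ L * Nat.totient Q ∧
      ∀ p : ℕ, p.Prime → Q < p → Nonempty (𝓞 L' →+* ZMod p) →
        Nonempty (𝓞 L →+* ZMod p) ∧ Q ∣ p - 1 := by
  have : NeZero Q := ⟨by omega⟩
  have hnf : NumberField (CyclotomicField Q L) := IsCyclotomicExtension.numberField {Q} L _
  have hz := IsCyclotomicExtension.zeta_spec Q L (CyclotomicField Q L)
  refine ⟨CyclotomicField Q L, inferInstance, hnf, ?_, ?_⟩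
  · rw [← Module.finrank_mul_finrank ℚ L (CyclotomicField Q L)]
    apply Nat.mul_le_mul_left
    have : IsGalois L (CyclotomicField Q L) := IsCyclotomicExtension.isGalois {Q} L _
    rw [← IsGalois.card_aut_eq_finrank L (CyclotomicField Q L), ← ZMod.card_units_eq_totient, ← Nat.card_eq_fintype_card]
    exact Nat.card_le_card_of_injective _ (hz.autToPow_injective L)
  · rintro p hp hQp ⟨f⟩
    have : Fact p.Prime := ⟨hp⟩
    refine ⟨⟨f.comp (algebraMap (𝓞 L) (𝓞 (CyclotomicField Q L)))⟩, ?_⟩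
    have h1 := hz.toInteger_isPrimitiveRoot
    have h2 := h1.isRoot_cyclotomic (by omega)
    have h3 : (Polynomial.cyclotomic Q (ZMod p)).IsRoot (f hz.toInteger) := by
      rw [← Polynomial.map_cyclotomic Q f]
      exact h2.map
    have : NeZero ((Q : ℕ) : ZMod p) := ⟨by
      rw [Ne, ZMod.natCast_eq_zero_iff]
      exact fun h => absurd (Nat.le_of_dvd (by omega) h) (by omega)⟩
    have h4 := Polynomial.isRoot_cyclotomic_iff.1 h3
    apply h4.dvd_of_pow_eq_one
    apply ZMod.pow_card_sub_one_eq_one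
    exact h4.ne_zero (by omega)

open NumberField in
theorem nt_main (L : Type*) [Field L] [NumberField L] (M C : ℕ) :
    ∃ (A : Finset ℕ) (l : ℕ), 1 ≤ l ∧
      (∀ p ∈ A, p.Prime ∧ M < p ∧ Nonempty (𝓞 L →+* ZMod p) ∧ (p - 1) ∣ l) ∧
      l ^ C < ∏ p ∈ A, p := by
  classical
  by_contra! H
  set c0 : ℝ := Real.log 4 + 4 with hc0
  have hc0pos : 0 < c0 := by have := Real.log_pos (show (1:ℝ) < 4 by norm_num); linarith
  set d : ℝ := ((Module.finrank ℚ L : ℕ) : ℝ) with hd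
  have hdpos : 0 < d := by rw [hd]; exact_mod_cast Module.finrank_pos
  have hl2 : 0 < Real.log 2 := Real.log_pos (by norm_num)
  obtain ⟨Q, hQ, hQε⟩ := totient_small (Real.log 2 / (2 * (C + 1) * c0 * d)) (by positivity)
  obtain ⟨L', _, _, hD, hgood⟩ := cyc_ext L Q hQ
  have hQ0 : (0:ℝ) < Q := by exact_mod_cast hQ
  set B := max M Q with hB
  set a : ℝ := C * c0 / Q with ha
  have ha0 : 0 ≤ a := by positivity
  have hlogQ : 0 ≤ Real.log Q := Real.log_natCast_nonneg Q
  set D : ℝ := ((Module.finrank ℚ L' : ℕ) : ℝ) with hDdef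
  have hD0 : 0 ≤ D := by positivity
  have haD : 2 * a * D < Real.log 2 := by
    have h1 : D ≤ d * Nat.totient Q := by rw [hDdef, hd]; exact_mod_cast hD
    have h2 : 2 * a * D ≤ 2 * a * (d * Nat.totient Q) := mul_le_mul_of_nonneg_left h1 (by positivity)
    have h3 : 2 * a * (d * Nat.totient Q) ≤ 2 * a * (d * (Real.log 2 / (2 * (C + 1) * c0 * d) * Q)) := by
      gcongr
    have h4 : 2 * a * (d * (Real.log 2 / (2 * (C + 1) * c0 * d) * Q)) = Real.log 2 * (C / (C + 1)) := by
      rw [ha]; field_simp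
    have h5 : (C : ℝ) / (C + 1) < 1 := by rw [div_lt_one (by positivity)]; linarith
    nlinarith
  let S : ℕ → Prop := fun n => n.Prime ∧ Nonempty (𝓞 L' →+* ZMod n)
  let S' : ℕ → Prop := fun n => B < n ∧ S n
  have hS' : ∀ N : ℕ, ∑ n ∈ Finset.range N, (if S' n then Real.log n else 0) ≤ a * N + C * Real.log Q := by
    intro N
    have h1 := H ((Finset.range N).filter S') (Q * Nat.lcmUpto (N / Q))
      (Nat.mul_pos hQ (Nat.lcmUpto_pos _)) (by
        intro p hp
        obtain ⟨hpN, hBp, hpp, hne⟩ := Finset.mem_filter.1 hp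
        rw [Finset.mem_range] at hpN
        obtain ⟨g1, g2⟩ := hgood p hpp (lt_of_le_of_lt (le_max_right _ _) hBp) hne
        refine ⟨hpp, lt_of_le_of_lt (le_max_left _ _) hBp, g1, ?_⟩
        obtain ⟨m, hm⟩ := g2
        rw [hm]
        apply Nat.mul_dvd_mul_left
        have hp2 := hpp.two_le
        have hm1 : 1 ≤ m := by
          rcases Nat.eq_zero_or_pos m with h | h
          · rw [h, mul_zero] at hm; omega
          · exact h
        have hm2 : m ≤ N / Q := (Nat.le_div_iff_mul_le hQ).2 (by rw [mul_comm, ← hm]; omega)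
        exact Finset.dvd_lcm (f := id) (Finset.mem_Icc.2 ⟨hm1, hm2⟩))
    have h2 : Real.log ((∏ p ∈ (Finset.range N).filter S', p : ℕ) : ℝ) ≤ Real.log (((Q * Nat.lcmUpto (N / Q)) ^ C : ℕ) : ℝ) := by
      apply Real.log_le_log
      · have : 0 < ∏ p ∈ (Finset.range N).filter S', p := by
          apply Finset.prod_pos
          intro p hp
          exact (Finset.mem_filter.1 hp).2.2.1.pos
        exact_mod_cast this
      · exact_mod_cast h1
    rw [Nat.cast_prod, Real.log_prod (by
      intro p hp
      have := (Finset.mem_filter.1 hp).2.2.1.ne_zero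
      exact_mod_cast this), Finset.sum_filter, Nat.cast_pow, Real.log_pow, Nat.cast_mul,
      Real.log_mul (by positivity) (by exact_mod_cast Nat.lcmUpto_ne_zero _), ← Chebyshev.psi_eq_log_lcmUpto] at h2
    have h3 := Chebyshev.psi_le_const_mul_self (x := ((N / Q : ℕ) : ℝ)) (by positivity)
    have h4 : ((N / Q : ℕ) : ℝ) ≤ N / Q := Nat.cast_div_le
    have h5 : Chebyshev.psi ((N / Q : ℕ) : ℝ) ≤ c0 * (N / Q) := h3.trans (mul_le_mul_of_nonneg_left h4 hc0pos.le)
    have h6 : (C : ℝ) * (Real.log Q + Chebyshev.psi ((N / Q : ℕ) : ℝ)) ≤ C * (Real.log Q + c0 * (N / Q)) := by gcongr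
    refine h2.trans (h6.trans (le_of_eq ?_))
    rw [ha]; ring
  obtain ⟨c1, j1, hup⟩ := analytic_upper S' a (C * Real.log Q) ha0 (by positivity) hS'
  obtain ⟨c2, j2, hlow⟩ := zeta_lower L' S (fun p hp hn => ⟨hp, hn⟩)
  have hkey : ∀ j : ℕ, max j1 j2 ≤ j → j * Real.log 2 - c2 ≤ D * (2 * a * j + c1 + B) := by
    intro j hj
    obtain ⟨X, hX⟩ := hlow j (le_trans (le_max_right _ _) hj)
    have h1 := hup j (le_trans (le_max_left _ _) hj) X
    refine hX.trans (mul_le_mul_of_nonneg_left ?_ hD0)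
    have h2 : ∑ n ∈ Finset.range X, (if S (n+1) then ((n + 1 : ℕ) : ℝ) ^ (-(sj j)) else 0) ≤
        ∑ n ∈ Finset.range X, ((if S' (n+1) then ((n + 1 : ℕ) : ℝ) ^ (-(sj j)) else 0) + (if n < B then 1 else 0)) := by
      apply Finset.sum_le_sum
      intro n _
      by_cases hn : S (n + 1)
      · by_cases hb : n < B
        · rw [if_pos hn, if_pos hb, if_neg (show ¬ S' (n+1) from fun h => by have := h.1; omega), zero_add]
          apply Real.rpow_le_one_of_one_le_of_nonpos
          · exact_mod_cast Nat.succ_le_succ (Nat.zero_le n)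
          · linarith [sj_gt j]
        · rw [if_pos hn, if_neg hb, if_pos (show S' (n+1) from ⟨by omega, hn⟩), add_zero]
      · rw [if_neg hn]
        have t1 : (0:ℝ) ≤ (if S' (n+1) then ((n + 1 : ℕ) : ℝ) ^ (-(sj j)) else 0) := by split_ifs <;> positivity
        have t2 : (0:ℝ) ≤ (if n < B then 1 else 0) := by split_ifs <;> norm_num
        linarith
    rw [Finset.sum_add_distrib] at h2
    have h3 : ∑ n ∈ Finset.range X, (if n < B then (1:ℝ) else 0) ≤ B := by
      rw [← Finset.sum_filter, Finset.sum_const, nsmul_eq_mul, mul_one]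
      have : ((Finset.range X).filter (fun n => n < B)).card ≤ (Finset.range B).card := by
        apply Finset.card_le_card
        intro n hn
        exact Finset.mem_range.2 (Finset.mem_filter.1 hn).2
      rw [Finset.card_range] at this
      exact_mod_cast this
    linarith
  have hδ : 0 < Real.log 2 - 2 * a * D := by linarith
  obtain ⟨k, hk⟩ := exists_nat_gt ((c2 + D * (c1 + B)) / (Real.log 2 - 2 * a * D))
  have h1 := hkey (max (max j1 j2) k) (le_max_left _ _)
  have h2 : (k : ℝ) ≤ ((max (max j1 j2) k : ℕ) : ℝ) := by exact_mod_cast le_max_right _ _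
  rw [div_lt_iff₀ hδ] at hk
  have h3 := mul_le_mul_of_nonneg_right h2 hδ.le
  linarith

open Polynomial in
theorem aeval_prod_map {R S : Type*} [CommRing R] [CommRing S] {n : ℕ} (f : R →+* S)
    (A : Matrix (Fin n) (Fin n) R) {ι : Type*} (s : Finset ι) (m : ι → R) :
    f.mapMatrix (aeval A (∏ t ∈ s, (X - C (m t)))) =
      aeval (f.mapMatrix A) (∏ t ∈ s, (X - C (f (m t)))) := by
  classical
  induction s using Finset.induction_on with
  | empty => simp
  | insert a s ha ih =>
    rw [Finset.prod_insert ha, Finset.prod_insert ha, map_mul, map_mul, map_mul, ih]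
    congr 1
    rw [map_sub, map_sub, map_sub, aeval_X, aeval_X, aeval_C, aeval_C]
    congr 1
    ext i j
    simp only [RingHom.mapMatrix_apply, Matrix.map_apply, Matrix.algebraMap_matrix_apply]
    split_ifs <;> simp

/-- specialization: homs to `GL_n(F_p)` for each good prime -/
theorem spec_group {K : Type u} [Field K] [CharZero K] {n : ℕ} (hn : 1 ≤ n)
    (Γ : Subgroup (GL (Fin n) K)) (r : ℕ) (γ : Fin r → GL (Fin n) K)
    (hmem : ∀ i, γ i ∈ Γ)
    (hgen : ∀ x ∈ Γ, ∃ k : Fin r → ℤ, x = (List.ofFn fun i => γ i ^ k i).prod)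
    (F : Finset Γ) (hF : 1 ∉ F) :
    ∃ (L : Type u) (_ : Field L) (_ : NumberField L) (M : ℕ), ∀ p : ℕ, p.Prime → M < p →
      Nonempty (NumberField.RingOfIntegers L →+* ZMod p) → ∃ Θ : Γ →* GL (Fin n) (ZMod p),
        (∀ x ∈ F, Θ x ≠ 1) ∧ (∀ i, (Θ ⟨γ i, hmem i⟩) ^ (p * (p - 1)) = 1) ∧
        (∀ i, IsSemisimpleElt (γ i) → (Θ ⟨γ i, hmem i⟩) ^ (p - 1) = 1) := by
  classical
  let Kb := AlgebraicClosure K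
  let α : K →+* Kb := algebraMap K Kb
  have hα : Function.Injective α := α.injective
  choose R N hN1 hNs hRN using fun i => gl_data (γ i)
  let E1 : Set Kb := Set.range fun t : Fin r × Fin n × Fin n => α ((γ t.1).1 t.2.1 t.2.2)
  let E2 : Set Kb := Set.range fun t : Fin r × Fin n × Fin n => α ((γ t.1)⁻¹.1 t.2.1 t.2.2)
  let E3 : Set Kb := ⋃ i, (R i : Set Kb)
  let E4 : Set Kb := ⋃ i, (fun t : Kb × Kb => (t.1 - t.2)⁻¹) '' ((R i : Set Kb) ×ˢ (R i : Set Kb))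
  let E5 : Set Kb := Set.range fun t : F × Fin n × Fin n =>
    (α ((t.1.1.1.1 : Matrix (Fin n) (Fin n) K) t.2.1 t.2.2) - α ((1 : Matrix (Fin n) (Fin n) K) t.2.1 t.2.2))⁻¹
  let E : Set Kb := E1 ∪ (E2 ∪ (E3 ∪ (E4 ∪ E5)))
  have hE : E.Finite := by
    refine (Set.finite_range _).union ((Set.finite_range _).union (Set.Finite.union ?_ (Set.Finite.union ?_ (Set.finite_range _))))
    · exact Set.finite_iUnion fun i => (R i).finite_toSet
    · exact Set.finite_iUnion fun i => ((R i).finite_toSet.prod (R i).finite_toSet).image _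
  obtain ⟨L, iL, iN, M, hM⟩ := spec_zmod E hE
  refine ⟨L, iL, iN, M + ∑ i, N i, ?_⟩
  intro p hp hMp hL
  have : Fact p.Prime := ⟨hp⟩
  let T := Algebra.adjoin ℤ E
  obtain ⟨ψ⟩ : Nonempty (T →+* ZMod p) := hM p hp (by omega) hL
  let sv : T →+* Kb := T.val.toRingHom
  have hsv : Function.Injective sv := Subtype.val_injective
  have hsub : ∀ x ∈ E, x ∈ T := fun x hx => Algebra.subset_adjoin hx
  let j : GL (Fin n) T →* GL (Fin n) Kb := GeneralLinearGroup.map sv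
  have hj : Function.Injective j := by
    intro a b hab
    apply Units.ext
    ext i k
    have := congrArg (fun z : GL (Fin n) Kb => z.1 i k) hab
    exact this
  let jK : GL (Fin n) K →* GL (Fin n) Kb := GeneralLinearGroup.map α
  let gT : Fin r → GL (Fin n) T := fun i =>
    { val := Matrix.of fun a b => ⟨α ((γ i).1 a b), hsub _ (Or.inl ⟨(i, a, b), rfl⟩)⟩
      inv := Matrix.of fun a b => ⟨α ((γ i)⁻¹.1 a b), hsub _ (Or.inr (Or.inl ⟨(i, a, b), rfl⟩))⟩
      val_inv := by
        have h1 : (γ i).1 * (γ i)⁻¹.1 = 1 := (γ i).mul_inv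
        ext a b
        have h2 := congrArg α (congrFun (congrFun h1 a) b)
        rw [Matrix.mul_apply, map_sum] at h2
        simp only [Matrix.mul_apply, Matrix.of_apply, AddSubmonoidClass.coe_finsetSum, MulMemClass.coe_mul]
        simp only [map_mul] at h2
        rw [h2, Matrix.one_apply, Matrix.one_apply]
        split_ifs <;> simp
      inv_val := by
        have h1 : (γ i)⁻¹.1 * (γ i).1 = 1 := (γ i).inv_mul
        ext a b
        have h2 := congrArg α (congrFun (congrFun h1 a) b)
        rw [Matrix.mul_apply, map_sum] at h2
        simp only [Matrix.mul_apply, Matrix.of_apply, AddSubmonoidClass.coe_finsetSum, MulMemClass.coe_mul]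
        simp only [map_mul] at h2
        rw [h2, Matrix.one_apply, Matrix.one_apply]
        split_ifs <;> simp }
  have hgT : ∀ i, j (gT i) = jK (γ i) := by
    intro i
    apply Units.ext
    ext a b
    rfl
  have hrange : ∀ x : Γ, jK x ∈ j.range := by
    rintro ⟨x, hx⟩
    obtain ⟨k, rfl⟩ := hgen x hx
    show (List.ofFn fun i => γ i ^ k i).prod ∈ j.range.comap jK
    apply Subgroup.list_prod_mem
    intro y hy
    obtain ⟨i, rfl⟩ := (List.mem_ofFn' _ _).1 hy
    have hmi : γ i ∈ j.range.comap jK := Subgroup.mem_comap.2 (MonoidHom.mem_range.2 ⟨gT i, hgT i⟩)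
    exact Subgroup.zpow_mem _ hmi _
  let θ : Γ →* GL (Fin n) T :=
    (MonoidHom.ofInjective hj).symm.toMonoidHom.comp ((jK.comp Γ.subtype).codRestrict j.range hrange)
  have hθ : ∀ x : Γ, j (θ x) = jK x := by
    intro x
    have := (MonoidHom.ofInjective hj).apply_symm_apply ⟨jK x, hrange x⟩
    exact congrArg Subtype.val this
  have hθγ : ∀ i, θ ⟨γ i, hmem i⟩ = gT i := by
    intro i
    apply hj
    rw [hθ, hgT]
  refine ⟨(GeneralLinearGroup.map ψ).comp θ, ?_, ?_⟩
  · intro x hx hone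
    have hx1 : x ≠ 1 := fun h => hF (h ▸ hx)
    obtain ⟨a, b, hab⟩ : ∃ a b, (x.1.1 : Matrix (Fin n) (Fin n) K) a b ≠ (1 : Matrix (Fin n) (Fin n) K) a b := by
      by_contra hcon
      push Not at hcon
      apply hx1
      apply Subtype.ext
      apply Units.ext
      ext a b; exact hcon a b
    let y : T := ⟨_, hsub _ (Or.inr (Or.inr (Or.inr (Or.inr ⟨(⟨x, hx⟩, a, b), rfl⟩))))⟩
    have h1 : ((θ x).1 a b - (1 : Matrix (Fin n) (Fin n) T) a b) * y = 1 := by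
      apply hsv
      rw [map_mul, map_sub, map_one]
      have e1 : sv ((θ x).1 a b) = α (x.1.1 a b) := congrArg (fun z : GL (Fin n) Kb => z.1 a b) (hθ x)
      have e2 : sv ((1 : Matrix (Fin n) (Fin n) T) a b) = α ((1 : Matrix (Fin n) (Fin n) K) a b) := by
        simp only [Matrix.one_apply]
        split_ifs <;> simp
      rw [e1, e2]
      exact mul_inv_cancel₀ (sub_ne_zero.2 fun e => hab (hα e))
    have h2 := congrArg ψ h1
    rw [map_mul, map_sub, map_one] at h2
    have e1 : ψ ((θ x).1 a b) = (1 : Matrix (Fin n) (Fin n) (ZMod p)) a b :=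
      congrArg (fun z : GL (Fin n) (ZMod p) => z.1 a b) hone
    have e2 : ψ ((1 : Matrix (Fin n) (Fin n) T) a b) = (1 : Matrix (Fin n) (Fin n) (ZMod p)) a b := by
      simp only [Matrix.one_apply]
      split_ifs <;> simp
    rw [e1, e2, sub_self, zero_mul] at h2
    exact zero_ne_one h2
  · have key : ∀ i, (((GeneralLinearGroup.map ψ).comp θ) ⟨γ i, hmem i⟩) ^ (p * (p - 1)) = 1 ∧
        (N i = 1 → (((GeneralLinearGroup.map ψ).comp θ) ⟨γ i, hmem i⟩) ^ (p - 1) = 1) := by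
      intro i
      have hNle : N i ≤ p := by
        have := Finset.single_le_sum (f := N) (fun _ _ => Nat.zero_le _) (Finset.mem_univ i)
        omega
      let mu : {x // x ∈ R i} → T := fun t => ⟨t.1, hsub _ (Or.inr (Or.inr (Or.inl (Set.mem_iUnion.2 ⟨i, t.2⟩))))⟩
      apply pow_of_data hn _ (Finset.univ : Finset {x // x ∈ R i}) (fun t => ψ (mu t)) ?_ (N i) hNle (hN1 i)
      · have h0 : (Polynomial.aeval (gT i).1 (∏ t : {x // x ∈ R i}, (Polynomial.X - Polynomial.C (mu t)))) ^ (N i) = 0 := by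
          have hinj : Function.Injective (sv.mapMatrix : Matrix (Fin n) (Fin n) T →+* Matrix (Fin n) (Fin n) Kb) := by
            intro a b hab
            ext c d
            exact congrFun (congrFun hab c) d
          apply hinj
          rw [map_pow, map_zero, ← hRN i]
          congr 1
          rw [aeval_prod_map, ← Finset.prod_coe_sort (R i) (fun μ => Polynomial.X - Polynomial.C μ)]
          have e0 : sv.mapMatrix (gT i).1 = (γ i).1.map (algebraMap K (AlgebraicClosure K)) :=
            congrArg Units.val (hgT i)
          rw [e0]
          rfl
        have h1 := congrArg (ψ.mapMatrix : Matrix (Fin n) (Fin n) T →+* Matrix (Fin n) (Fin n) (ZMod p)) h0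
        rw [map_zero, map_pow] at h1
        rw [← h1]
        congr 1
        rw [aeval_prod_map]
        have e0 : ((GeneralLinearGroup.map ψ).comp θ ⟨γ i, hmem i⟩).1 = ψ.mapMatrix (gT i).1 := by
          rw [MonoidHom.comp_apply, hθγ]; rfl
        rw [e0]
      · intro a _ b _ hab
        by_contra hne
        have hne' : a.1 ≠ b.1 := fun h => hne (Subtype.ext h)
        let y : T := ⟨(a.1 - b.1)⁻¹, hsub _ (Or.inr (Or.inr (Or.inr (Or.inl (Set.mem_iUnion.2 ⟨i, ⟨(a.1, b.1), ⟨a.2, b.2⟩, rfl⟩⟩)))))⟩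
        have h1 : (mu a - mu b) * y = 1 := by
          apply hsv
          rw [map_mul, map_sub, map_one]
          exact mul_inv_cancel₀ (sub_ne_zero.2 hne')
        have h2 := congrArg ψ h1
        rw [map_mul, map_sub, map_one, hab, sub_self, zero_mul] at h2
        exact zero_ne_one h2
    exact ⟨fun i => (key i).1, fun i hi => (key i).2 (hNs i hi)⟩

/-- If a subgroup `Γ` of `GL n K` (`K` of characteristic zero) is boundedly generated by
elements `γ₁, …, γ_r` at most one of which is not semi-simple, then `Γ` is
virtually solvable. -/
theorem stmt_0 {K : Type*} [Field K] [CharZero K] {n : ℕ} (hn : 1 ≤ n)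
    (Γ : Subgroup (GL (Fin n) K)) (r : ℕ) (γ : Fin r → GL (Fin n) K)
    (hmem : ∀ i, γ i ∈ Γ)
    (hgen : ∀ x ∈ Γ, ∃ k : Fin r → ℤ, x = (List.ofFn fun i => γ i ^ k i).prod)
    (hss : ∀ i j : Fin r, ¬ IsSemisimpleElt (γ i) → ¬ IsSemisimpleElt (γ j) → i = j) :
    IsVirtuallySolvable ↥Γ := by
  classical
  apply ultra_solv (5 ^ (2 * n ^ 2))
  intro F hF
  rcases Nat.eq_zero_or_pos r with hr | hr
  · subst hr
    have hone : ∀ x : Γ, x = 1 := by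
      rintro ⟨x, hx⟩
      obtain ⟨k, hk⟩ := hgen x hx
      apply Subtype.ext
      simpa using hk
    refine ⟨⊤, by simp, ?_, ?_⟩
    · rw [Subgroup.index_top]; exact Nat.one_le_pow _ _ (by norm_num)
    · intro a _ b _ c _ d _
      rw [hone ⁅⁅a, b⁆, ⁅c, d⁆⁆]; exact hF
  obtain ⟨j0, hj0⟩ : ∃ j0 : Fin r, ∀ i, i ≠ j0 → IsSemisimpleElt (γ i) := by
    by_cases h : ∃ j, ¬ IsSemisimpleElt (γ j)
    · obtain ⟨j, hj⟩ := h
      exact ⟨j, fun i hi => by_contra fun hc => hi (hss i j hc hj)⟩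
    · push Not at h
      exact ⟨⟨0, hr⟩, fun i _ => h i⟩
  obtain ⟨L, iL, iN, M, hM⟩ := spec_group hn Γ r γ hmem hgen F hF
  obtain ⟨A, l, hl, hA, hbig⟩ := nt_main L M ((r + 1) ^ 2)
  have hAf : ∀ p : A, Fact (p : ℕ).Prime := fun p => ⟨(hA p p.2).1⟩
  choose Θ hΘ1 hΘ2 hΘ3 using fun p : A => hM p (hA p p.2).1 (hA p p.2).2.1 (hA p p.2).2.2.1
  let Ψ : Γ →* (∀ p : A, GL (Fin n) (ZMod p)) := MonoidHom.pi Θ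
  let g : Fin r → Ψ.range := fun i => Ψ.rangeRestrict ⟨γ i, hmem i⟩
  let π : ∀ p : A, Ψ.range →* GL (Fin n) (ZMod p) := fun p => (Pi.evalMonoidHom _ p).comp Ψ.range.subtype
  have hπ : ∀ p x, π p (Ψ.rangeRestrict x) = Θ p x := fun p x => rfl
  have hNeZ : ∀ p : A, NeZero (p : ℕ) := fun p => ⟨(hA p p.2).1.ne_zero⟩
  have hg : ∀ x : Ψ.range, ∃ k : Fin r → ℤ, x = (List.ofFn fun i => g i ^ k i).prod := by
    intro x
    obtain ⟨⟨y, hy⟩, rfl⟩ := Ψ.rangeRestrict_surjective x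
    obtain ⟨k, hk⟩ := hgen y hy
    refine ⟨k, ?_⟩
    have e1 : (⟨y, hy⟩ : Γ) = (List.ofFn fun i => (⟨γ i, hmem i⟩ : Γ) ^ k i).prod := by
      apply Γ.subtype_injective
      rw [map_list_prod, List.map_ofFn]
      exact hk
    rw [e1, map_list_prod, List.map_ofFn]
    congr 2
    funext i
    exact map_zpow Ψ.rangeRestrict _ _
  have hp1 : ∀ (p : A) (i), i ≠ j0 → (Θ p ⟨γ i, hmem i⟩) ^ l = 1 := by
    intro p i hi
    obtain ⟨q, hq⟩ := (hA p p.2).2.2.2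
    rw [hq, pow_mul, hΘ3 p i (hj0 i hi), one_pow]
  obtain ⟨p, hnorm, hidx⟩ := fin_lemma (fun p : A => (p : ℕ)) (fun p => (hA p p.2).1)
    Subtype.val_injective π r g hg j0 l hl
    (by
      intro i hi
      apply Subtype.ext
      funext p
      exact hp1 p i hi)
    (by
      intro p
      obtain ⟨q, hq⟩ := (hA p p.2).2.2.2
      show (Θ p ⟨γ j0, hmem j0⟩) ^ (l * p) = 1
      have : l * p = (p * (p - 1)) * q := by rw [hq]; ring
      rw [this, pow_mul, hΘ2, one_pow])
    (by
      rw [Finset.prod_coe_sort A (fun p => p)]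
      exact hbig)
  set v := π p (g j0 ^ l) with hv
  have hvp : v ^ (p : ℕ) = 1 := by
    obtain ⟨q, hq⟩ := (hA p p.2).2.2.2
    rw [hv, map_pow, ← pow_mul]
    show (Θ p ⟨γ j0, hmem j0⟩) ^ (l * p) = 1
    have : l * p = (p * (p - 1)) * q := by rw [hq]; ring
    rw [this, pow_mul, hΘ2, one_pow]
  let V := (Subgroup.zpowers v).subgroupOf (π p).range
  have hle : Subgroup.zpowers v ≤ (π p).range := by
    rw [Subgroup.zpowers_le]; exact ⟨_, rfl⟩
  have hVn : V.Normal := by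
    constructor
    rintro ⟨a, ha⟩ hmemV ⟨_, x, rfl⟩
    exact (Subgroup.mem_normalizer_iff.1 (hnorm x) a).1 hmemV
  obtain ⟨G0, hG1, hG2⟩ := fin_struct p n (π p).range.subtype (π p).range.subtype_injective V
    (by
      rintro ⟨a, ha⟩ haV ⟨b, hb⟩ hbV
      obtain ⟨s, hs⟩ := Subgroup.mem_zpowers_iff.1 (Subgroup.mem_subgroupOf.1 haV)
      obtain ⟨t, ht⟩ := Subgroup.mem_zpowers_iff.1 (Subgroup.mem_subgroupOf.1 hbV)
      apply Subtype.ext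
      show a * b = b * a
      have hs : v ^ s = a := hs
      have ht : v ^ t = b := ht
      rw [← hs, ← ht, ← _root_.zpow_add, ← _root_.zpow_add, add_comm])
    (by
      rw [Nat.card_congr (Subgroup.subgroupOfEquivOfLe hle).toEquiv, Nat.card_zpowers]
      exact orderOf_dvd_of_pow_eq_one hvp)
    hidx
  let q : Γ →* (π p).range := (π p).rangeRestrict.comp Ψ.rangeRestrict
  have hq : Function.Surjective q := (π p).rangeRestrict_surjective.comp Ψ.rangeRestrict_surjective
  refine ⟨G0.comap q, ?_, ?_, ?_⟩
  · rw [Subgroup.index_comap_of_surjective _ hq]; exact Subgroup.index_ne_zero_of_finite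
  · rw [Subgroup.index_comap_of_surjective _ hq]; exact hG1
  · intro a ha b hb c hc d hd hmF
    have h1 : q ⁅⁅a, b⁆, ⁅c, d⁆⁆ = 1 := by
      rw [map_commutatorElement, map_commutatorElement, map_commutatorElement]
      exact hG2 _ ha _ hb _ hc _ hd
    exact hΘ1 p _ hmF (congrArg Subtype.val h1)
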